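/- arXiv:1704.04830 — 3 statements merged into one kernel-verified Lean document; each statement's English description precedes it below -/
import Mathlib

section
/- Let n ≥ 20 be an integer. Then π_{(n,n)}((1,1)) ≤ e^{100}/n⁴, where e is Euler's number. (This is the quantitative content of the paper's Ω(n⁴) lower bound for the sandpile transience class of the n × n grid.) -/
/-- A grid walk of length `t` from `v ∈ ℤ²`: a function on `{0,…,t}` starting at `v`
whose consecutive values differ by exactly `1` in `ℓ¹`-norm. -/
def IsGridWalk (v : ℤ × ℤ) (t : ℕ) (w : Fin (t + 1) → ℤ × ℤ) : Prop :=
  w 0 = v ∧ ∀ j : Fin t,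
    |(w j.succ).1 - (w j.castSucc).1| + |(w j.succ).2 - (w j.castSucc).2| = 1

/-- Membership in the box `B = {1,…,n}²`. -/
def InBox (n : ℕ) (p : ℤ × ℤ) : Prop :=
  1 ≤ p.1 ∧ p.1 ≤ (n : ℤ) ∧ 1 ≤ p.2 ∧ p.2 ≤ (n : ℤ)

/-- `N_t(v, u)`: the number of grid walks of length `t` from `v` staying in `B \ {u}`
before time `t` and ending at `u` at time `t`. -/
noncomputable def gridHitCount (n : ℕ) (v u : ℤ × ℤ) (t : ℕ) : ℕ :=
  {w : Fin (t + 1) → ℤ × ℤ | IsGridWalk v t w ∧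
    (∀ j : Fin t, InBox n (w j.castSucc) ∧ w j.castSucc ≠ u) ∧
    w (Fin.last t) = u}.ncard

/-- The potential `π_u(v) = Σ_{t ≥ 0} N_t(v,u) / 4^t`. -/
noncomputable def gridPotential (n : ℕ) (u v : ℤ × ℤ) : ℝ :=
  ∑' t : ℕ, (gridHitCount n v u t : ℝ) / 4 ^ t

/-!
A function that is nonnegative, at least `1` at the target, and superharmonic for the simple random
walk dominates the probability of hitting the target before exiting, so it suffices to exhibit
explicit superharmonic barriers.

Near the target corner `(n, n)`, with coordinates `x`, `y` measured from the lines just outside the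
box, the function `x y / (x² + y²)²` is harmonic in the continuum and vanishes on both sides of the
box; adding a constant to `x² + y²` makes it superharmonic on the lattice. Hence the potential is
`O(n⁻²)` at distance of order `n` from `(n, n)`.

Near the opposite corner, a discretely harmonic quartic on the square of side `M ≈ n / 2` is
nonnegative on the two sides that lie just outside the box and at least `M⁴ - M²` on the other two
sides, but only `6 (M² - 1)` at `(1, 1)`. This gains the second factor `O(n⁻²)`.
-/

section Neighbors

/-- The four nearest neighbors of a point of `ℤ²`. -/
def gridNeighbors (p : ℤ × ℤ) : Finset (ℤ × ℤ) :=
  {(p.1 + 1, p.2), (p.1 - 1, p.2), (p.1, p.2 + 1), (p.1, p.2 - 1)}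

lemma mem_gridNeighbors_iff_abs {p q : ℤ × ℤ} :
    q ∈ gridNeighbors p ↔ |q.1 - p.1| + |q.2 - p.2| = 1 := by
  simp only [gridNeighbors, Finset.mem_insert, Finset.mem_singleton, Prod.ext_iff]
  rcases abs_cases (q.1 - p.1) with h | h <;> rcases abs_cases (q.2 - p.2) with h' | h' <;> omega

lemma sum_gridNeighbors {M : Type*} [AddCommMonoid M] (f : ℤ × ℤ → M) (p : ℤ × ℤ) :
    ∑ q ∈ gridNeighbors p, f q =
      f (p.1 + 1, p.2) + (f (p.1 - 1, p.2) + (f (p.1, p.2 + 1) + f (p.1, p.2 - 1))) := by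
  unfold gridNeighbors
  rw [Finset.sum_insert, Finset.sum_insert, Finset.sum_insert, Finset.sum_singleton] <;>
    simp only [Finset.mem_insert, Finset.mem_singleton, Prod.ext_iff] <;> omega

lemma inBox_corner {n : ℕ} (hn : 1 ≤ n) : InBox n ((n : ℤ), (n : ℤ)) :=
  ⟨Nat.one_le_cast.mpr hn, le_rfl, Nat.one_le_cast.mpr hn, le_rfl⟩

lemma InBox.one_le {n : ℕ} {p : ℤ × ℤ} (hp : InBox n p) : 1 ≤ n :=
  Nat.one_le_cast.mp (hp.1.trans hp.2.1)

lemma InBox.bounds_of_mem_gridNeighbors {m : ℕ} {p q : ℤ × ℤ} (hp : InBox m p)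
    (hq : q ∈ gridNeighbors p) : 0 ≤ q.1 ∧ q.1 ≤ m + 1 ∧ 0 ≤ q.2 ∧ q.2 ≤ m + 1 := by
  simp only [gridNeighbors, Finset.mem_insert, Finset.mem_singleton, Prod.ext_iff] at hq
  obtain ⟨h₁, h₂, h₃, h₄⟩ := hp
  omega

/-- Superharmonicity for the simple random walk: the average of `h` over the four neighbors of `p`
is at most `h p`. -/
def IsGridSuperharmonicAt (h : ℤ × ℤ → ℝ) (p : ℤ × ℤ) : Prop :=
  ∑ q ∈ gridNeighbors p, h q ≤ 4 * h p

lemma IsGridSuperharmonicAt.const_mul {h : ℤ × ℤ → ℝ} {p : ℤ × ℤ} {c : ℝ} (hc : 0 ≤ c)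
    (hh : IsGridSuperharmonicAt h p) : IsGridSuperharmonicAt (fun q => c * h q) p := by
  unfold IsGridSuperharmonicAt at hh ⊢
  calc ∑ q ∈ gridNeighbors p, c * h q = c * ∑ q ∈ gridNeighbors p, h q := (Finset.mul_sum ..).symm
    _ ≤ c * (4 * h p) := mul_le_mul_of_nonneg_left hh hc
    _ = 4 * (c * h p) := by ring

end Neighbors

section Walks

variable {n : ℕ} {u v : ℤ × ℤ}

/-- The walks counted by `gridHitCount n v u t`: those of length `t` from `v` that stay in the box
and hit `u` for the first time at time `t`. -/
def hitWalks (n : ℕ) (v u : ℤ × ℤ) (t : ℕ) : Set (Fin (t + 1) → ℤ × ℤ) :=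
  {w | IsGridWalk v t w ∧ (∀ j : Fin t, InBox n (w j.castSucc) ∧ w j.castSucc ≠ u) ∧
    w (Fin.last t) = u}

lemma gridHitCount_eq_ncard (n : ℕ) (v u : ℤ × ℤ) (t : ℕ) :
    gridHitCount n v u t = (hitWalks n v u t).ncard := rfl

lemma hitWalks_zero_subset (n : ℕ) (v u : ℤ × ℤ) : hitWalks n v u 0 ⊆ {fun _ => v} := by
  rintro w ⟨⟨hw, -⟩, -⟩
  exact funext fun j => hw ▸ congrArg w (Fin.fin_one_eq_zero j)

lemma hitWalks_zero_of_ne (hvu : v ≠ u) : hitWalks n v u 0 = ∅ :=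
  Set.eq_empty_of_forall_notMem fun _ ⟨⟨hw, _⟩, _, hlast⟩ => hvu (hw.symm.trans hlast)

lemma hitWalks_succ_of_stopped (hv : ¬ InBox n v ∨ v = u) (t : ℕ) :
    hitWalks n v u (t + 1) = ∅ := by
  refine Set.eq_empty_of_forall_notMem ?_
  rintro w ⟨⟨hw, -⟩, hinside, -⟩
  obtain ⟨hbox, hne⟩ := hinside 0
  rw [Fin.castSucc_zero, hw] at hbox hne
  exact hv.elim (· hbox) hne

lemma tail_mem_hitWalks {t : ℕ} {w : Fin (t + 2) → ℤ × ℤ} (hw : w ∈ hitWalks n v u (t + 1)) :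
    Fin.tail w ∈ hitWalks n (w 1) u t :=
  ⟨⟨rfl, fun j => hw.1.2 j.succ⟩, fun j => hw.2.1 j.succ, hw.2.2⟩

lemma hitWalks_succ_subset (n : ℕ) (v u : ℤ × ℤ) (t : ℕ) :
    hitWalks n v u (t + 1) ⊆
      ⋃ q ∈ gridNeighbors v, (Fin.cons v : _ → Fin (t + 2) → ℤ × ℤ) '' hitWalks n q u t := by
  intro w hw
  have hstart : w 0 = v := hw.1.1
  have hstep : w 1 ∈ gridNeighbors v := by
    rw [mem_gridNeighbors_iff_abs, ← hstart]
    exact hw.1.2 0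
  refine Set.mem_biUnion hstep ⟨Fin.tail w, tail_mem_hitWalks hw, ?_⟩
  rw [← hstart, Fin.cons_self_tail]

lemma hitWalks_finite (n : ℕ) (v u : ℤ × ℤ) (t : ℕ) : (hitWalks n v u t).Finite := by
  induction t generalizing v with
  | zero => exact (Set.finite_singleton _).subset (hitWalks_zero_subset n v u)
  | succ t ih =>
    exact ((gridNeighbors v).finite_toSet.biUnion fun q _ => (ih q).image _).subset
      (hitWalks_succ_subset n v u t)

lemma gridHitCount_zero_le_one (n : ℕ) (v u : ℤ × ℤ) : gridHitCount n v u 0 ≤ 1 := by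
  simpa only [gridHitCount_eq_ncard, Set.ncard_singleton] using
    Set.ncard_le_ncard (hitWalks_zero_subset n v u)

lemma gridHitCount_zero_of_ne (hvu : v ≠ u) : gridHitCount n v u 0 = 0 := by
  rw [gridHitCount_eq_ncard, hitWalks_zero_of_ne hvu, Set.ncard_empty]

lemma gridHitCount_succ_of_stopped (hv : ¬ InBox n v ∨ v = u) (t : ℕ) :
    gridHitCount n v u (t + 1) = 0 := by
  rw [gridHitCount_eq_ncard, hitWalks_succ_of_stopped hv, Set.ncard_empty]

lemma gridHitCount_succ_le (n : ℕ) (v u : ℤ × ℤ) (t : ℕ) :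
    gridHitCount n v u (t + 1) ≤ ∑ q ∈ gridNeighbors v, gridHitCount n q u t := by
  have hfin (q : ℤ × ℤ) := hitWalks_finite n q u t
  calc (hitWalks n v u (t + 1)).ncard
      ≤ (⋃ q ∈ gridNeighbors v,
          (Fin.cons v : _ → Fin (t + 2) → ℤ × ℤ) '' hitWalks n q u t).ncard :=
        Set.ncard_le_ncard (hitWalks_succ_subset n v u t)
          ((gridNeighbors v).finite_toSet.biUnion fun q _ => (hfin q).image _)
    _ ≤ ∑ q ∈ gridNeighbors v,
          ((Fin.cons v : _ → Fin (t + 2) → ℤ × ℤ) '' hitWalks n q u t).ncard :=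
        Finset.set_ncard_biUnion_le _ _
    _ ≤ ∑ q ∈ gridNeighbors v, gridHitCount n q u t :=
        Finset.sum_le_sum fun q _ => Set.ncard_image_le (hfin q)

end Walks

section Comparison

variable {n : ℕ} {u v : ℤ × ℤ}

/-- The sum of the first `T` terms of `gridPotential n u v`: the probability that the walk from `v`
reaches `u` within the box before time `T`. It is the quantity on which the comparison principle is
proved by induction. -/
noncomputable def truncatedPotential (n : ℕ) (u : ℤ × ℤ) (T : ℕ) (v : ℤ × ℤ) : ℝ :=
  ∑ t ∈ Finset.range T, (gridHitCount n v u t : ℝ) / 4 ^ t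

lemma gridPotential_le_of_truncatedPotential_le {c : ℝ}
    (h : ∀ T, truncatedPotential n u T v ≤ c) : gridPotential n u v ≤ c :=
  Real.tsum_le_of_sum_range_le (fun t => by positivity) h

lemma truncatedPotential_of_not_inBox (hv : ¬ InBox n v) (hvu : v ≠ u) (T : ℕ) :
    truncatedPotential n u T v = 0 := by
  refine Finset.sum_eq_zero fun t _ => ?_
  cases t with
  | zero => simp [gridHitCount_zero_of_ne hvu]
  | succ t => simp [gridHitCount_succ_of_stopped (Or.inl hv)]

lemma truncatedPotential_self_le_one (n : ℕ) (u : ℤ × ℤ) (T : ℕ) :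
    truncatedPotential n u T u ≤ 1 := by
  cases T with
  | zero => simp [truncatedPotential]
  | succ T =>
    rw [truncatedPotential, Finset.sum_range_succ']
    simpa [gridHitCount_succ_of_stopped (n := n) (u := u) (Or.inr rfl)] using
      gridHitCount_zero_le_one n u u

lemma truncatedPotential_succ_le (hvu : v ≠ u) (T : ℕ) :
    truncatedPotential n u (T + 1) v ≤
      (∑ q ∈ gridNeighbors v, truncatedPotential n u T q) / 4 := by
  have hstep (t : ℕ) : (gridHitCount n v u (t + 1) : ℝ) / 4 ^ (t + 1) ≤
      (∑ q ∈ gridNeighbors v, (gridHitCount n q u t : ℝ) / 4 ^ t) / 4 := by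
    rw [← Finset.sum_div, div_div, ← pow_succ]
    gcongr
    exact_mod_cast gridHitCount_succ_le n v u t
  unfold truncatedPotential
  rw [Finset.sum_range_succ', gridHitCount_zero_of_ne hvu, Nat.cast_zero, zero_div, add_zero,
    Finset.sum_comm, Finset.sum_div]
  exact Finset.sum_le_sum fun t _ => hstep t

theorem truncatedPotential_le_of_superharmonic {D : Set (ℤ × ℤ)} {h : ℤ × ℤ → ℝ}
    (nonneg : ∀ p ∈ D, 0 ≤ h p)
    (one_le_target : u ∈ D → 1 ≤ h u)
    (superharmonic : ∀ p ∈ D, p ≠ u → IsGridSuperharmonicAt h p)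
    (boundary : ∀ p ∈ D, ∀ q ∈ gridNeighbors p, q ∉ D → ∀ T, truncatedPotential n u T q ≤ h q)
    (T : ℕ) {p : ℤ × ℤ} (hp : p ∈ D) : truncatedPotential n u T p ≤ h p := by
  induction T generalizing p with
  | zero => simpa [truncatedPotential] using nonneg p hp
  | succ T ih =>
    rcases eq_or_ne p u with rfl | hpu
    · exact (truncatedPotential_self_le_one n p _).trans (one_le_target hp)
    have hneighbors : ∀ q ∈ gridNeighbors p, truncatedPotential n u T q ≤ h q := fun q hq =>
      (em (q ∈ D)).elim ih fun hqD => boundary p hp q hq hqD T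
    calc truncatedPotential n u (T + 1) p
        ≤ (∑ q ∈ gridNeighbors p, truncatedPotential n u T q) / 4 :=
          truncatedPotential_succ_le hpu T
      _ ≤ (∑ q ∈ gridNeighbors p, h q) / 4 := by gcongr with q hq; exact hneighbors q hq
      _ ≤ h p := by have := superharmonic p hp hpu; unfold IsGridSuperharmonicAt at this; linarith

end Comparison

section CornerBarrier

/-- The barrier near the target corner. For `a = 0` it is, up to a factor, the imaginary part of
`-1 / z²` at `z = x + i y`; the shift `a` makes it superharmonic on the lattice. -/
noncomputable def cornerBarrier (a x y : ℝ) : ℝ := x * y / (x ^ 2 + y ^ 2 + a) ^ 2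

lemma cornerBarrier_swap (a x y : ℝ) : cornerBarrier a x y = cornerBarrier a y x := by
  rw [cornerBarrier, cornerBarrier, mul_comm x y, add_comm (x ^ 2)]

lemma cornerBarrier_nonneg (a : ℝ) {x y : ℝ} (hx : 0 ≤ x) (hy : 0 ≤ y) :
    0 ≤ cornerBarrier a x y := by
  unfold cornerBarrier; positivity

lemma cornerBarrier_le {a x y r : ℝ} (ha : 0 ≤ a) (hr : 0 < r) (h : r ^ 2 ≤ x ^ 2 + y ^ 2) :
    cornerBarrier a x y ≤ 1 / (2 * r ^ 2) := by
  have hs : r ^ 2 ≤ x ^ 2 + y ^ 2 + a := by linarith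
  have hxy : x * y ≤ (x ^ 2 + y ^ 2 + a) / 2 := by linarith [two_mul_le_add_sq x y]
  have hr2 : 0 < r ^ 2 := by positivity
  unfold cornerBarrier
  generalize x ^ 2 + y ^ 2 + a = s at hs hxy ⊢
  have hs0 : 0 < s := hr2.trans_le hs
  calc x * y / s ^ 2 ≤ s / 2 / s ^ 2 := by gcongr
    _ = 1 / (2 * s) := by field_simp
    _ ≤ 1 / (2 * r ^ 2) := by gcongr

lemma cornerBarrier_add_one_add_sub_one {a x y S : ℝ} (ha : 0 < a)
    (hS : S = x ^ 2 + y ^ 2 + a + 1) :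
    cornerBarrier a (x + 1) y + cornerBarrier a (x - 1) y =
      2 * x * y / S ^ 2 *
        ((1 - 4 * (1 / S) + 4 * x ^ 2 / S ^ 2) / (1 - 4 * x ^ 2 / S ^ 2) ^ 2) := by
  have hright : (x + 1) ^ 2 + y ^ 2 + a = S + 2 * x := by rw [hS]; ring
  have hleft : (x - 1) ^ 2 + y ^ 2 + a = S - 2 * x := by rw [hS]; ring
  have hS0 : S ≠ 0 := by rw [hS]; positivity
  have hright0 : S + 2 * x ≠ 0 := by rw [← hright]; positivity
  have hleft0 : S - 2 * x ≠ 0 := by rw [← hleft]; positivity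
  have hden : 1 - 4 * x ^ 2 / S ^ 2 = (S + 2 * x) * (S - 2 * x) / S ^ 2 := by field_simp; ring
  rw [cornerBarrier, cornerBarrier, hright, hleft, hden]
  generalize hA : S + 2 * x = A at hright0 ⊢
  generalize hB : S - 2 * x = B at hleft0 ⊢
  field_simp
  rw [← hA, ← hB]
  ring

lemma div_one_sub_sq_le {e u : ℝ} (he : 0 ≤ e) (he' : e ≤ 1 / 4) (hu : 0 ≤ u) (hu' : u ≤ 1 / 8) :
    (1 - 4 * e + u) / (1 - u) ^ 2 ≤ 1 - 4 * e + 3 * u + 7 * u ^ 2 := by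
  have hpos : 0 < (1 - u) ^ 2 := pow_pos (by linarith) 2
  have hinv : 1 / (1 - u) ^ 2 ≤ 1 + 2 * u + 4 * u ^ 2 := by
    rw [div_le_iff₀ hpos]
    have : 0 ≤ u ^ 2 * (1 - 6 * u + 4 * u ^ 2) := mul_nonneg (sq_nonneg u) (by nlinarith)
    linarith
  calc (1 - 4 * e + u) / (1 - u) ^ 2 = (1 - 4 * e + u) * (1 / (1 - u) ^ 2) := by ring
    _ ≤ (1 - 4 * e + u) * (1 + 2 * u + 4 * u ^ 2) := by gcongr; linarith
    _ = 1 - 4 * e + 3 * u + 6 * u ^ 2 + 4 * u * u ^ 2 - (8 * (e * u) + 16 * (e * u ^ 2)) := by ring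
    _ ≤ 1 - 4 * e + 3 * u + 6 * u ^ 2 + 1 * u ^ 2 - 0 := by
        gcongr
        · linarith
        · positivity
    _ = 1 - 4 * e + 3 * u + 7 * u ^ 2 := by ring

lemma div_one_sub_sq_add_le {e u v : ℝ} (he : 0 ≤ e) (he' : e ≤ 1 / 32) (hu : 0 ≤ u) (hv : 0 ≤ v)
    (huv : u + v ≤ 4 * e - 128 * e ^ 2) :
    (1 - 4 * e + u) / (1 - u) ^ 2 + (1 - 4 * e + v) / (1 - v) ^ 2 ≤ 2 * (1 / (1 - e) ^ 2) := by
  have huv' : u + v ≤ 4 * e := by linarith [sq_nonneg e]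
  have hsq : u ^ 2 + v ^ 2 ≤ 16 * e ^ 2 :=
    calc u ^ 2 + v ^ 2 ≤ (u + v) ^ 2 := by linarith [mul_nonneg hu hv, add_sq u v]
      _ ≤ (4 * e) ^ 2 := by gcongr
      _ = 16 * e ^ 2 := by ring
  have hinv : 1 + 2 * e ≤ 1 / (1 - e) ^ 2 := by
    rw [le_div_iff₀ (pow_pos (by linarith) 2)]
    nlinarith [mul_nonneg (sq_nonneg e) (by linarith : 0 ≤ 3 - 2 * e)]
  calc (1 - 4 * e + u) / (1 - u) ^ 2 + (1 - 4 * e + v) / (1 - v) ^ 2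
      ≤ (1 - 4 * e + 3 * u + 7 * u ^ 2) + (1 - 4 * e + 3 * v + 7 * v ^ 2) := by
        gcongr <;> apply div_one_sub_sq_le <;> linarith
    _ ≤ 2 * (1 + 2 * e) := by linarith [sq_nonneg e]
    _ ≤ 2 * (1 / (1 - e) ^ 2) := by gcongr

lemma cornerBarrier_neighbor_sum_le {a x y : ℝ} (ha : 31 ≤ a) (hx : 0 ≤ x) (hy : 0 ≤ y) :
    cornerBarrier a (x + 1) y + cornerBarrier a (x - 1) y +
      (cornerBarrier a x (y + 1) + cornerBarrier a x (y - 1)) ≤ 4 * cornerBarrier a x y := by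
  obtain ⟨S, hS⟩ : ∃ S, S = x ^ 2 + y ^ 2 + a + 1 := ⟨_, rfl⟩
  have ha0 : 0 < a := by linarith
  have hS32 : 32 ≤ S := by linarith [sq_nonneg x, sq_nonneg y]
  have : 0 < S := by linarith
  have hcenter : cornerBarrier a x y = x * y / S ^ 2 * (1 / (1 - 1 / S) ^ 2) := by
    have hS1 : S - 1 ≠ 0 := by linarith
    have hshift : 1 - 1 / S = (S - 1) / S := by field_simp
    rw [cornerBarrier, show x ^ 2 + y ^ 2 + a = S - 1 by linarith, hshift]
    field_simp
  have huv : 4 * x ^ 2 / S ^ 2 + 4 * y ^ 2 / S ^ 2 ≤ 4 * (1 / S) - 128 * (1 / S) ^ 2 :=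
    calc 4 * x ^ 2 / S ^ 2 + 4 * y ^ 2 / S ^ 2 = 4 * (x ^ 2 + y ^ 2) / S ^ 2 := by ring
      _ ≤ 4 * (S - 32) / S ^ 2 := by gcongr; linarith
      _ = 4 * (1 / S) - 128 * (1 / S) ^ 2 := by field_simp; ring
  have hprofile := div_one_sub_sq_add_le (by positivity)
    (one_div_le_one_div_of_le (by norm_num) hS32) (by positivity) (by positivity) huv
  rw [cornerBarrier_swap a x (y + 1), cornerBarrier_swap a x (y - 1),
    cornerBarrier_add_one_add_sub_one ha0 hS,
    cornerBarrier_add_one_add_sub_one ha0 (hS.trans (by ring)), hcenter, mul_right_comm 2 y x,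
    ← mul_add]
  calc _ ≤ 2 * x * y / S ^ 2 * (2 * (1 / (1 - 1 / S) ^ 2)) := by gcongr
    _ = _ := by ring

lemma truncatedPotential_corner_le {a : ℝ} (ha : 31 ≤ a) {n : ℕ} {p : ℤ × ℤ} (hp : InBox n p)
    (T : ℕ) : truncatedPotential n ((n : ℤ), (n : ℤ)) T p ≤
      (a + 2) ^ 2 * cornerBarrier a (n + 1 - p.1) (n + 1 - p.2) := by
  have hnonneg {q : ℤ × ℤ} (h₁ : q.1 ≤ n + 1) (h₂ : q.2 ≤ n + 1) :
      0 ≤ (a + 2) ^ 2 * cornerBarrier a (n + 1 - q.1) (n + 1 - q.2) := by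
    refine mul_nonneg (sq_nonneg _) (cornerBarrier_nonneg a ?_ ?_) <;> rw [sub_nonneg] <;>
      assumption_mod_cast
  refine truncatedPotential_le_of_superharmonic (D := {q | InBox n q})
    (h := fun q => (a + 2) ^ 2 * cornerBarrier a (n + 1 - q.1) (n + 1 - q.2)) ?_ ?_ ?_ ?_ T hp
  · rintro q ⟨-, h₁, -, h₂⟩
    exact hnonneg (by omega) (by omega)
  · intro _
    have : a + 2 ≠ 0 := by linarith
    refine le_of_eq ?_
    simp only [cornerBarrier, Int.cast_natCast, add_sub_cancel_left]
    field_simp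
    ring
  · rintro q ⟨-, h₁, -, h₂⟩ -
    have h₁' : (q.1 : ℝ) ≤ n := by exact_mod_cast h₁
    have h₂' : (q.2 : ℝ) ≤ n := by exact_mod_cast h₂
    refine IsGridSuperharmonicAt.const_mul (sq_nonneg _) ?_
    have := cornerBarrier_neighbor_sum_le ha (x := n + 1 - q.1) (y := n + 1 - q.2)
      (by linarith) (by linarith)
    rw [IsGridSuperharmonicAt, sum_gridNeighbors]
    simp only [Int.cast_add, Int.cast_sub, Int.cast_one, ← sub_sub, ← sub_add]
    linarith
  · intro q hq r hr hr_out T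
    obtain ⟨-, h₁, -, h₂⟩ := hq.bounds_of_mem_gridNeighbors hr
    rw [truncatedPotential_of_not_inBox hr_out fun h => hr_out (h ▸ inBox_corner hq.one_le)]
    exact hnonneg h₁ h₂

end CornerBarrier

section QuarticBarrier

/-- The barrier near the starting corner, on the square of side `M`: the real part `Re z⁴` corrected
by `- x² - y²` to be harmonic on the lattice, plus a multiple of the harmonic function `x y` that
makes it nonnegative. -/
def quarticBarrier (M x y : ℝ) : ℝ :=
  x ^ 4 - x ^ 2 + (y ^ 4 - y ^ 2) - 6 * x ^ 2 * y ^ 2 + 6 * M ^ 2 * x * y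

lemma isGridSuperharmonicAt_quarticBarrier (M : ℝ) (p : ℤ × ℤ) :
    IsGridSuperharmonicAt (fun q => quarticBarrier M q.1 q.2) p := by
  rw [IsGridSuperharmonicAt, sum_gridNeighbors]
  refine le_of_eq ?_
  simp only [quarticBarrier]
  push_cast
  ring

lemma le_quarticBarrier {M x y : ℝ} (hx : 0 ≤ x) (hxM : x ≤ M) (hy : 0 ≤ y) (hyM : y ≤ M) :
    x ^ 4 - x ^ 2 + (y ^ 4 - y ^ 2) ≤ quarticBarrier M x y := by
  have hxy : x * y ≤ M ^ 2 := by rw [sq]; exact mul_le_mul hxM hyM hy (hx.trans hxM)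
  have := mul_le_mul_of_nonneg_left hxy (mul_nonneg hx hy)
  unfold quarticBarrier
  linarith

lemma intCast_pow_four_sub_sq_nonneg (k : ℤ) : (0 : ℝ) ≤ (k : ℝ) ^ 4 - (k : ℝ) ^ 2 := by
  have : k ^ 2 ≤ (k ^ 2) ^ 2 := Int.le_self_sq _
  rw [← pow_mul] at this
  exact sub_nonneg.mpr (by exact_mod_cast this)

lemma quarticBarrier_intCast_nonneg {M : ℝ} {x y : ℤ} (hx : 0 ≤ x) (hxM : x ≤ M) (hy : 0 ≤ y)
    (hyM : y ≤ M) : 0 ≤ quarticBarrier M x y :=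
  (add_nonneg (intCast_pow_four_sub_sq_nonneg x) (intCast_pow_four_sub_sq_nonneg y)).trans
    (le_quarticBarrier (mod_cast hx) hxM (mod_cast hy) hyM)

lemma le_quarticBarrier_of_side {M : ℝ} {x y : ℤ} (hx : 0 ≤ x) (hxM : x ≤ M) (hy : 0 ≤ y)
    (hyM : y ≤ M) (hside : x = M ∨ y = M) : M ^ 4 - M ^ 2 ≤ quarticBarrier M x y := by
  refine le_trans ?_ (le_quarticBarrier (mod_cast hx) hxM (mod_cast hy) hyM)
  rcases hside with rfl | rfl
  · exact le_add_of_nonneg_right (intCast_pow_four_sub_sq_nonneg y)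
  · exact le_add_of_nonneg_left (intCast_pow_four_sub_sq_nonneg x)

lemma quarticBarrier_one_one_div {M : ℝ} (hM : 1 < M) :
    quarticBarrier M 1 1 / (M ^ 4 - M ^ 2) = 6 / M ^ 2 := by
  have hM2 : M ^ 2 - 1 ≠ 0 := (sub_pos.mpr (one_lt_pow₀ hM two_ne_zero)).ne'
  rw [show M ^ 4 - M ^ 2 = M ^ 2 * (M ^ 2 - 1) by ring, quarticBarrier]
  field_simp
  ring

variable {n m : ℕ} {u : ℤ × ℤ} {c : ℝ}

lemma truncatedPotential_le_quarticBarrier (hun : InBox n u) (hum : ¬ InBox m u) (hc : 0 ≤ c)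
    (hside : ∀ T q, InBox n q → q.1 = m + 1 ∨ q.2 = m + 1 → truncatedPotential n u T q ≤ c)
    {p : ℤ × ℤ} (hp : InBox m p) (T : ℕ) :
    truncatedPotential n u T p ≤
      c / ((m + 1) ^ 4 - (m + 1) ^ 2) * quarticBarrier (m + 1) p.1 p.2 := by
  have hM : (0 : ℝ) < (m + 1) ^ 4 - (m + 1) ^ 2 :=
    sub_pos.mpr (pow_lt_pow_right₀ (mod_cast Nat.lt_add_one_of_le hp.one_le) (by norm_num))
  have hscale : 0 ≤ c / (((m : ℝ) + 1) ^ 4 - (m + 1) ^ 2) := div_nonneg hc hM.le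
  refine truncatedPotential_le_of_superharmonic (D := {q | InBox m q})
    (h := fun q => c / ((m + 1) ^ 4 - (m + 1) ^ 2) * quarticBarrier (m + 1) q.1 q.2)
    ?_ (absurd · hum) ?_ ?_ T hp
  · rintro q ⟨h₁, h₁', h₂, h₂'⟩
    exact mul_nonneg hscale (quarticBarrier_intCast_nonneg (by omega)
      (mod_cast h₁'.trans (by omega)) (by omega) (mod_cast h₂'.trans (by omega)))
  · exact fun q _ _ => (isGridSuperharmonicAt_quarticBarrier _ q).const_mul hscale
  · intro q hq r hr hr_out T
    obtain ⟨h₁, h₁', h₂, h₂'⟩ := hq.bounds_of_mem_gridNeighbors hr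
    have h₁M : (r.1 : ℝ) ≤ m + 1 := mod_cast h₁'
    have h₂M : (r.2 : ℝ) ≤ m + 1 := mod_cast h₂'
    by_cases hrn : InBox n r
    · have hr_side : r.1 = m + 1 ∨ r.2 = m + 1 := by
        by_contra! hne
        obtain ⟨h₁n, -, h₂n, -⟩ := hrn
        exact hr_out ⟨h₁n, by omega, h₂n, by omega⟩
      calc truncatedPotential n u T r ≤ c := hside T r hrn hr_side
        _ = c / ((m + 1) ^ 4 - (m + 1) ^ 2) * ((m + 1) ^ 4 - (m + 1) ^ 2) :=
          (div_mul_cancel₀ c hM.ne').symm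
        _ ≤ c / ((m + 1) ^ 4 - (m + 1) ^ 2) * quarticBarrier (m + 1) r.1 r.2 := by
          gcongr
          exact le_quarticBarrier_of_side h₁ h₁M h₂ h₂M (mod_cast hr_side)
    · rw [truncatedPotential_of_not_inBox hrn fun h => hrn (h ▸ hun)]
      exact mul_nonneg hscale (quarticBarrier_intCast_nonneg h₁ h₁M h₂ h₂M)

lemma truncatedPotential_one_one_le (hm : 1 ≤ m) (hun : InBox n u) (hum : ¬ InBox m u)
    (hc : 0 ≤ c)
    (hside : ∀ T q, InBox n q → q.1 = m + 1 ∨ q.2 = m + 1 → truncatedPotential n u T q ≤ c)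
    (T : ℕ) : truncatedPotential n u T (1, 1) ≤ c * (6 / (m + 1) ^ 2) := by
  have hm1 : (1 : ℝ) < m + 1 := by exact_mod_cast Nat.lt_add_one_of_le hm
  have hstart : InBox m (1, 1) := ⟨le_rfl, Nat.one_le_cast.mpr hm, le_rfl, Nat.one_le_cast.mpr hm⟩
  refine (truncatedPotential_le_quarticBarrier hun hum hc hside hstart T).trans_eq ?_
  rw [← quarticBarrier_one_one_div hm1, Int.cast_one]
  ring

end QuarticBarrier

lemma two_pow_le_exp (k : ℕ) : (2 : ℝ) ^ k ≤ Real.exp k := by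
  rw [← Real.exp_one_pow]
  gcongr
  linarith [Real.add_one_le_exp 1]

lemma truncatedPotential_le_of_half_le_sub {n : ℕ} {q : ℤ × ℤ} (hq : InBox n q)
    (hfar : (n : ℝ) / 2 ≤ n + 1 - q.1 ∨ (n : ℝ) / 2 ≤ n + 1 - q.2) (T : ℕ) :
    truncatedPotential n ((n : ℤ), (n : ℤ)) T q ≤ 2178 / (n : ℝ) ^ 2 := by
  have hn : 0 < n := hq.one_le
  have hdist : ((n : ℝ) / 2) ^ 2 ≤ (n + 1 - q.1 : ℝ) ^ 2 + (n + 1 - q.2 : ℝ) ^ 2 := by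
    rcases hfar with h | h
    · exact (pow_le_pow_left₀ (by positivity) h 2).trans (le_add_of_nonneg_right (sq_nonneg _))
    · exact (pow_le_pow_left₀ (by positivity) h 2).trans (le_add_of_nonneg_left (sq_nonneg _))
  calc truncatedPotential n ((n : ℤ), (n : ℤ)) T q
      ≤ (31 + 2) ^ 2 * cornerBarrier 31 (n + 1 - q.1) (n + 1 - q.2) :=
        truncatedPotential_corner_le le_rfl hq T
    _ ≤ (31 + 2) ^ 2 * (1 / (2 * ((n : ℝ) / 2) ^ 2)) := by
        gcongr
        exact cornerBarrier_le (by norm_num) (by positivity) hdist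
    _ = 2178 / (n : ℝ) ^ 2 := by field_simp; norm_num

theorem sandpile_grid_lower_bound_potential_general (n : ℕ) (hn : 1 ≤ n) :
    gridPotential n ((n : ℤ), (n : ℤ)) (1, 1) ≤ 52272 / (n : ℝ) ^ 4 := by
  refine gridPotential_le_of_truncatedPotential_le fun T => ?_
  obtain rfl | hn2 := hn.eq_or_lt
  · exact (truncatedPotential_self_le_one 1 (1, 1) T).trans (by norm_num)
  obtain ⟨m, hm, hmn, hm_le, hm_ge⟩ : ∃ m : ℕ, 1 ≤ m ∧ m < n ∧ 2 * m ≤ n ∧ n ≤ 2 * (m + 1) :=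
    ⟨n / 2, by omega⟩
  have hhalf : (n : ℝ) / 2 ≤ m + 1 := by rw [div_le_iff₀' two_pos]; exact_mod_cast hm_ge
  have hhalf' : (m : ℝ) ≤ n / 2 := by rw [le_div_iff₀' two_pos]; exact_mod_cast hm_le
  have htarget_out : ¬ InBox m ((n : ℤ), (n : ℤ)) := fun h => by have := h.2.1; omega
  have hside (T : ℕ) (q : ℤ × ℤ) (hq : InBox n q) (hq_side : q.1 = m + 1 ∨ q.2 = m + 1) :
      truncatedPotential n ((n : ℤ), (n : ℤ)) T q ≤ 2178 / (n : ℝ) ^ 2 := by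
    refine truncatedPotential_le_of_half_le_sub hq (hq_side.imp ?_ ?_) T <;>
      intro h <;> rw [h] <;> push_cast <;> linarith
  calc truncatedPotential n ((n : ℤ), (n : ℤ)) T (1, 1)
      ≤ 2178 / (n : ℝ) ^ 2 * (6 / (m + 1) ^ 2) :=
        truncatedPotential_one_one_le hm (inBox_corner hn) htarget_out (by positivity) hside T
    _ ≤ 2178 / (n : ℝ) ^ 2 * (6 / ((n : ℝ) / 2) ^ 2) := by gcongr
    _ = 52272 / (n : ℝ) ^ 4 := by field_simp; norm_num

/-- For every integer `n ≥ 20`, `π_{(n,n)}((1,1)) ≤ e^100 / n^4`. -/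
theorem sandpile_grid_lower_bound_potential (n : ℕ) (hn : 20 ≤ n) :
    gridPotential n ((n : ℤ), (n : ℤ)) (1, 1) ≤ Real.exp 100 / (n : ℝ) ^ 4 := by
  have hconst : (52272 : ℝ) ≤ Real.exp 100 := le_trans (by norm_num) (two_pow_le_exp 100)
  exact (sandpile_grid_lower_bound_potential_general n (by omega)).trans (by gcongr)
end

section
/- Let n ≥ 20 and t ≥ n − 1 be integers. Then Pr_1^t[w(t) = n, MAX(w) = n, and MIN(w) ≥ 1] ≤ min{ e^{25}/n³, 64·(n/t)³ }, where e is Euler's number. -/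
/-- A 1D walk of length `t` started at `i`: a function on `{0,…,t}` starting at `i`
whose consecutive values differ by exactly `1`. -/
def IsWalk (i : ℤ) (t : ℕ) (w : Fin (t + 1) → ℤ) : Prop :=
  w 0 = i ∧ ∀ j : Fin t, |w j.succ - w j.castSucc| = 1

/-- The number of walks of length `t` started at `i` satisfying `P`. -/
noncomputable def walkCount (i : ℤ) (t : ℕ) (P : (Fin (t + 1) → ℤ) → Prop) : ℕ :=
  {w : Fin (t + 1) → ℤ | IsWalk i t w ∧ P w}.ncard

/-- `Pr_i^t[P]`: the number of walks of length `t` started at `i` satisfying `P`,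
divided by `2 ^ t`. -/
noncomputable def walkProb (i : ℤ) (t : ℕ) (P : (Fin (t + 1) → ℤ) → Prop) : ℝ :=
  (walkCount i t P : ℝ) / 2 ^ t

/-- `w(t) = n`. -/
def endsAt {t : ℕ} (n : ℤ) (w : Fin (t + 1) → ℤ) : Prop := w (Fin.last t) = n

/-- `MAX(w) = n`. -/
def maxEq {t : ℕ} (n : ℤ) (w : Fin (t + 1) → ℤ) : Prop :=
  (∀ j, w j ≤ n) ∧ ∃ j, w j = n

/-- `MIN(w) ≥ m`. -/
def minGE {t : ℕ} (m : ℤ) (w : Fin (t + 1) → ℤ) : Prop := ∀ j, m ≤ w j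

/-!
Write `p t i` for the probability that the walk is at `i` at time `t` and has stayed in
`{1, …, n}`, and put `α = π / (2 (n + 1))`.

Pairing `p t` with `i ↦ sin (i α)` gives an energy which one step of the walk multiplies by `cos α`,
up to a loss of `p t n / 2` at the right end. Hence `∑ t, p t n / (2 cos α ^ (t + 1))` is at most
the initial energy `sin α`. On the other hand, `p t` divided by the positive Dirichlet eigenfunction
`i ↦ sin (2 i α)` decreases along `i, i + 2, …`, so `cos (2 α) ^ 2 * p t n ≤ p (t + 2) n`: the loss
decays at most geometrically, and a single loss is a small fraction of the whole energy. This yields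
`p t n ≤ 6 sin α ^ 3 cos α ^ t ≤ 6 α ^ 3 exp (-t α ^ 2 / 2)`.
-/

open Real Finset

section Walks

variable {i : ℤ} {t : ℕ} {S : Set ℤ} {m : ℤ}

/-- The event that a walk ends at `m` and never leaves `S`. -/
def EndsAtWithin (S : Set ℤ) (m : ℤ) (w : Fin (t + 1) → ℤ) : Prop :=
  endsAt m w ∧ ∀ j, w j ∈ S

theorem isWalk_snoc_iff {w : Fin (t + 1) → ℤ} :
    IsWalk i (t + 1) (Fin.snoc w m : Fin (t + 1 + 1) → ℤ) ↔
      IsWalk i t w ∧ |m - w (Fin.last t)| = 1 := by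
  simp only [IsWalk, Fin.snoc_apply_zero, Fin.forall_fin_succ', Fin.snoc_castSucc, Fin.succ_last,
    Fin.snoc_last, Fin.succ_castSucc, and_assoc]

theorem endsAtWithin_snoc_iff {w : Fin (t + 1) → ℤ} (hm : m ∈ S) :
    EndsAtWithin S m (Fin.snoc w m : Fin (t + 1 + 1) → ℤ) ↔ ∀ j, w j ∈ S := by
  simp only [EndsAtWithin, endsAt, Fin.forall_fin_succ' (n := t + 1), Fin.snoc_castSucc,
    Fin.snoc_last, hm, and_true, true_and]

theorem finite_setOf_isWalk_endsAtWithin (hS : S.Finite) :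
    {w : Fin (t + 1) → ℤ | IsWalk i t w ∧ EndsAtWithin S m w}.Finite :=
  (Set.Finite.pi' fun _ => hS).subset fun _ hw => hw.2.2

theorem setOf_isWalk_endsAtWithin_succ (hm : m ∈ S) :
    {w | IsWalk i (t + 1) w ∧ EndsAtWithin S m w} =
      (fun w : Fin (t + 1) → ℤ => (Fin.snoc w m : Fin (t + 1 + 1) → ℤ)) ''
        ({w | IsWalk i t w ∧ EndsAtWithin S (m - 1) w} ∪
          {w | IsWalk i t w ∧ EndsAtWithin S (m + 1) w}) := by
  have last_step (k : ℤ) : |m - k| = 1 ↔ k = m - 1 ∨ k = m + 1 := by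
    rw [abs_eq zero_le_one]; omega
  have snoc_mem (w : Fin (t + 1) → ℤ) :
      (IsWalk i (t + 1) (Fin.snoc w m : Fin (t + 1 + 1) → ℤ) ∧
        EndsAtWithin S m (Fin.snoc w m : Fin (t + 1 + 1) → ℤ)) ↔
      (IsWalk i t w ∧ EndsAtWithin S (m - 1) w) ∨ (IsWalk i t w ∧ EndsAtWithin S (m + 1) w) := by
    rw [isWalk_snoc_iff, endsAtWithin_snoc_iff hm, last_step]
    simp only [EndsAtWithin, endsAt]
    tauto
  ext w
  constructor
  · intro hw
    have snoc_init : (Fin.snoc (Fin.init w) m : Fin (t + 1 + 1) → ℤ) = w := by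
      rw [← hw.2.1, Fin.snoc_init_self]
    exact ⟨Fin.init w, (snoc_mem _).1 (snoc_init.symm ▸ hw), snoc_init⟩
  · rintro ⟨v, hv, rfl⟩
    exact (snoc_mem v).2 hv

theorem walkCount_endsAtWithin_succ (hS : S.Finite) (hm : m ∈ S) :
    walkCount i (t + 1) (EndsAtWithin S m) =
      walkCount i t (EndsAtWithin S (m - 1)) + walkCount i t (EndsAtWithin S (m + 1)) := by
  have disjoint : Disjoint {w : Fin (t + 1) → ℤ | IsWalk i t w ∧ EndsAtWithin S (m - 1) w}
      {w | IsWalk i t w ∧ EndsAtWithin S (m + 1) w} := by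
    refine Set.disjoint_left.2 fun w hw hw' => ?_
    have h : m - 1 = m + 1 := hw.2.1.symm.trans hw'.2.1
    omega
  rw [walkCount, setOf_isWalk_endsAtWithin_succ hm,
    Set.ncard_image_of_injective _ (Fin.snoc_left_injective (α := fun _ => ℤ) m),
    Set.ncard_union_eq disjoint (finite_setOf_isWalk_endsAtWithin hS)
      (finite_setOf_isWalk_endsAtWithin hS), walkCount, walkCount]

theorem walkCount_endsAtWithin_of_notMem (hm : m ∉ S) :
    walkCount i t (EndsAtWithin S m) = 0 := by
  have no_walk : {w : Fin (t + 1) → ℤ | IsWalk i t w ∧ EndsAtWithin S m w} = ∅ :=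
    Set.eq_empty_of_forall_notMem fun w hw => hm (hw.2.1 ▸ hw.2.2 (Fin.last t))
  rw [walkCount, no_walk, Set.ncard_empty]

theorem walkCount_zero_endsAtWithin_self (hi : i ∈ S) :
    walkCount i 0 (EndsAtWithin S i) = 1 := by
  rw [walkCount, Set.ncard_eq_one]
  refine ⟨fun _ => i, Set.eq_singleton_iff_unique_mem.2 ⟨?_, fun w hw => ?_⟩⟩
  · exact ⟨⟨rfl, fun j => j.elim0⟩, rfl, fun _ => hi⟩
  · exact funext fun j => (congrArg w (Fin.fin_one_eq_zero j)).trans hw.1.1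

theorem walkCount_zero_endsAtWithin_of_ne (hm : m ≠ i) :
    walkCount i 0 (EndsAtWithin S m) = 0 := by
  have no_walk : {w : Fin (0 + 1) → ℤ | IsWalk i 0 w ∧ EndsAtWithin S m w} = ∅ :=
    Set.eq_empty_of_forall_notMem fun w hw => hm (hw.2.1.symm.trans hw.1.1)
  rw [walkCount, no_walk, Set.ncard_empty]

end Walks

/-- The probability that a walk of length `t` started at `1` ends at `i` and stays in
`{1, …, n}`. Positions are natural numbers: only `0, …, n + 1` matter, and the two ends `0` and
`n + 1` carry the Dirichlet boundary condition. -/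
noncomputable def confinedProb (n t i : ℕ) : ℝ :=
  walkProb 1 t (EndsAtWithin (Set.Icc 1 (n : ℤ)) i)

theorem walkProb_endsAt_maxEq_minGE (n t : ℕ) :
    walkProb 1 t (fun w => endsAt (n : ℤ) w ∧ maxEq (n : ℤ) w ∧ minGE 1 w) =
      confinedProb n t n := by
  have event_eq : (fun w : Fin (t + 1) → ℤ => endsAt (n : ℤ) w ∧ maxEq (n : ℤ) w ∧ minGE 1 w) =
      EndsAtWithin (Set.Icc 1 (n : ℤ)) n := by
    funext w
    refine propext ⟨fun ⟨hend, hmax, hmin⟩ => ⟨hend, fun j => ⟨hmin j, hmax.1 j⟩⟩, ?_⟩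
    exact fun ⟨hend, hmem⟩ => ⟨hend, ⟨fun j => (hmem j).2, Fin.last t, hend⟩, fun j => (hmem j).1⟩
  rw [confinedProb, event_eq]

section ConfinedProb

variable {n : ℕ}

theorem confinedProb_nonneg (n t i : ℕ) : 0 ≤ confinedProb n t i := by
  unfold confinedProb walkProb
  positivity

theorem confinedProb_left (n t : ℕ) : confinedProb n t 0 = 0 := by
  rw [confinedProb, walkProb, walkCount_endsAtWithin_of_notMem (by simp), Nat.cast_zero, zero_div]

theorem confinedProb_right (n t : ℕ) : confinedProb n t (n + 1) = 0 := by
  rw [confinedProb, walkProb, walkCount_endsAtWithin_of_notMem (by simp), Nat.cast_zero, zero_div]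

theorem confinedProb_zero_one (hn : 1 ≤ n) : confinedProb n 0 1 = 1 := by
  have h : (1 : ℤ) ∈ Set.Icc 1 (n : ℤ) := ⟨le_rfl, mod_cast hn⟩
  rw [confinedProb, walkProb, Nat.cast_one, walkCount_zero_endsAtWithin_self h, Nat.cast_one,
    pow_zero, div_one]

theorem confinedProb_zero_of_ne_one (n : ℕ) {i : ℕ} (hi : i ≠ 1) : confinedProb n 0 i = 0 := by
  rw [confinedProb, walkProb, walkCount_zero_endsAtWithin_of_ne (mod_cast hi), Nat.cast_zero,
    zero_div]

theorem confinedProb_succ (t : ℕ) {i : ℕ} (hi : i < n) :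
    confinedProb n (t + 1) (i + 1) = (confinedProb n t i + confinedProb n t (i + 2)) / 2 := by
  have hmem : ((i + 1 : ℕ) : ℤ) ∈ Set.Icc 1 (n : ℤ) := by
    rw [Set.mem_Icc]; omega
  have hleft : ((i + 1 : ℕ) : ℤ) - 1 = i := by push_cast; ring
  have hright : ((i + 1 : ℕ) : ℤ) + 1 = (i + 2 : ℕ) := by push_cast; ring
  rw [confinedProb, walkProb, walkCount_endsAtWithin_succ (Set.finite_Icc _ _) hmem, hleft, hright,
    confinedProb, walkProb, confinedProb, walkProb, pow_succ]
  push_cast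
  ring

theorem confinedProb_one_one_of_ne_zero {t : ℕ} (ht : t ≠ 0) : confinedProb 1 t 1 = 0 := by
  obtain ⟨u, rfl⟩ := Nat.exists_eq_succ_of_ne_zero ht
  rw [confinedProb_succ u one_pos, confinedProb_left, confinedProb_right 1, add_zero, zero_div]

end ConfinedProb

section GroundState

/-- A positive eigenfunction `s`, with eigenvalue `l`, of the averaging operator on `{1, …, n}` with
Dirichlet boundary conditions at `0` and `n + 1`. -/
structure IsGroundState (n : ℕ) (l : ℝ) (s : ℕ → ℝ) : Prop where
  left : s 0 = 0
  right : s (n + 1) = 0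
  pos : ∀ i < n, 0 < s (i + 1)
  average : ∀ i < n, (s i + s (i + 2)) / 2 = l * s (i + 1)

theorem sin_add_sin_add_two (i : ℕ) (β : ℝ) :
    sin (i * β) + sin ((i + 2 : ℕ) * β) = 2 * cos β * sin ((i + 1 : ℕ) * β) := by
  rw [add_comm, sin_add_sin]
  push_cast
  ring_nf

theorem pos_of_add_one_mul_eq {n : ℕ} {x y : ℝ} (h : (n + 1) * x = y) (hy : 0 < y) : 0 < x :=
  pos_of_mul_pos_right (h ▸ hy) (by positivity)

theorem isGroundState_sin {n : ℕ} {θ : ℝ} (hθ : (n + 1) * θ = π) :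
    IsGroundState n (cos θ) fun i => sin (i * θ) where
  left := by simp
  right := by push_cast; rw [hθ, sin_pi]
  pos i hi := by
    have hθ_pos : 0 < θ := pos_of_add_one_mul_eq hθ pi_pos
    have hi' : ((i + 1 : ℕ) : ℝ) < n + 1 := by exact_mod_cast Nat.succ_lt_succ hi
    exact sin_pos_of_pos_of_lt_pi (by positivity) (hθ ▸ by gcongr)
  average i _ := by rw [sin_add_sin_add_two]; ring

variable {n : ℕ} {l : ℝ} {s : ℕ → ℝ}

theorem IsGroundState.nonneg (hs : IsGroundState n l s) {i : ℕ} (hi : i ≤ n + 1) : 0 ≤ s i := by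
  rcases i with _ | i
  · exact hs.left.ge
  · rcases (Nat.le_of_succ_le_succ hi).eq_or_lt with rfl | hin
    · exact hs.right.ge
    · exact (hs.pos i hin).le

theorem average_mul_le_average_mul {a b c l s₀ s₁ s₂ s₃ s₄ : ℝ} (h₁ : 0 ≤ s₁) (h₂ : 0 < s₂)
    (h₃ : 0 ≤ s₃) (average₁ : (s₀ + s₂) / 2 = l * s₁) (average₃ : (s₂ + s₄) / 2 = l * s₃)
    (hab : b * s₀ ≤ a * s₂) (hbc : c * s₂ ≤ b * s₄) :
    (b + c) / 2 * s₁ ≤ (a + b) / 2 * s₃ := by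
  have upper : (b + c) / 2 * s₂ ≤ b * (l * s₃) := by rw [← average₃]; linarith
  have lower : b * (l * s₁) ≤ (a + b) / 2 * s₂ := by rw [← average₁]; linarith
  refine le_of_mul_le_mul_right ?_ h₂
  calc (b + c) / 2 * s₁ * s₂ = (b + c) / 2 * s₂ * s₁ := by ring
    _ ≤ b * (l * s₃) * s₁ := by gcongr
    _ = b * (l * s₁) * s₃ := by ring
    _ ≤ (a + b) / 2 * s₂ * s₃ := by gcongr
    _ = (a + b) / 2 * s₃ * s₂ := by ring

theorem IsGroundState.confinedProb_add_two_mul_le (hs : IsGroundState n l s) (t : ℕ) {i : ℕ}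
    (hi : i < n) : confinedProb n t (i + 2) * s i ≤ confinedProb n t i * s (i + 2) := by
  induction t generalizing i with
  | zero =>
    rw [confinedProb_zero_of_ne_one n (by omega), zero_mul]
    exact mul_nonneg (confinedProb_nonneg ..) (hs.nonneg (by omega))
  | succ t ih =>
    rcases i with _ | i
    · rw [hs.left, confinedProb_left, mul_zero, zero_mul]
    rcases Nat.lt_or_ge (i + 2) n with hin | hin
    · rw [confinedProb_succ t hin, confinedProb_succ t (by omega : i < n)]
      exact average_mul_le_average_mul (hs.pos i (by omega)).le (hs.pos (i + 1) hi)
        (hs.pos (i + 2) hin).le (hs.average i (by omega)) (hs.average (i + 2) hin)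
        (ih (by omega)) (ih hin)
    · obtain rfl : n = i + 2 := by omega
      rw [hs.right, confinedProb_right, mul_zero, zero_mul]

theorem IsGroundState.sq_mul_confinedProb_le (hs : IsGroundState n l s) (hn : 2 ≤ n) (t : ℕ) :
    l ^ 2 * confinedProb n t n ≤ confinedProb n (t + 2) n := by
  obtain ⟨k, rfl⟩ := Nat.exists_eq_add_of_le' hn
  have two_steps : confinedProb (k + 2) (t + 2) (k + 2) =
      (confinedProb (k + 2) t k + confinedProb (k + 2) t (k + 2)) / 4 := by
    rw [confinedProb_succ (t + 1) (Nat.lt_succ_self (k + 1)), confinedProb_right,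
      confinedProb_succ t (by omega : k < k + 2)]
    ring
  have s_two_steps : l ^ 2 * s (k + 2) = (s k + s (k + 2)) / 4 := by
    have average_last := hs.average (k + 1) (by omega)
    rw [hs.right] at average_last
    linear_combination (-l) * average_last - hs.average k (by omega) / 2
  refine le_of_mul_le_mul_right ?_ (hs.pos (k + 1) (by omega))
  set p := confinedProb (k + 2) t
  calc l ^ 2 * p (k + 2) * s (k + 2) = (p (k + 2) * s k + p (k + 2) * s (k + 2)) / 4 := by
        linear_combination p (k + 2) * s_two_steps
    _ ≤ (p k * s (k + 2) + p (k + 2) * s (k + 2)) / 4 := by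
        gcongr ?_ / 4
        gcongr ?_ + _
        exact hs.confinedProb_add_two_mul_le t (by omega)
    _ = confinedProb (k + 2) (t + 2) (k + 2) * s (k + 2) := by rw [two_steps]; ring

theorem IsGroundState.sq_div_mul_confinedProb_div_le (hs : IsGroundState n l s) (hn : 2 ≤ n)
    {c : ℝ} (hc : 0 < c) (t : ℕ) :
    (l / c) ^ 2 * (confinedProb n t n / (2 * c ^ (t + 1))) ≤
      confinedProb n (t + 2) n / (2 * c ^ (t + 2 + 1)) := by
  calc (l / c) ^ 2 * (confinedProb n t n / (2 * c ^ (t + 1)))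
      = l ^ 2 * confinedProb n t n / (2 * c ^ (t + 2 + 1)) := by field_simp; ring
    _ ≤ confinedProb n (t + 2) n / (2 * c ^ (t + 2 + 1)) := by
        gcongr; exact hs.sq_mul_confinedProb_le hn t

end GroundState

section Energy

theorem sum_range_add_two_mul (f s : ℕ → ℝ) (n : ℕ) :
    ∑ j ∈ range n, (f j + f (j + 2)) * s (j + 1) =
      ∑ j ∈ range n, f (j + 1) * (s j + s (j + 2)) +
        (f 0 * s 1 - f 1 * s 0 + f (n + 1) * s n - f n * s (n + 1)) := by
  induction n with
  | zero => simp
  | succ n ih => rw [sum_range_succ, sum_range_succ, ih]; ring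

/-- The pairing of the position of the confined walk at time `t` with `i ↦ sin (i α)`. -/
noncomputable def sinEnergy (n : ℕ) (α : ℝ) (t : ℕ) : ℝ :=
  ∑ j ∈ range n, confinedProb n t (j + 1) * sin ((j + 1 : ℕ) * α)

variable {n : ℕ} {α : ℝ}

theorem sinEnergy_zero (hn : 1 ≤ n) (α : ℝ) : sinEnergy n α 0 = sin α := by
  rw [sinEnergy, sum_eq_single_of_mem 0 (mem_range.2 hn)]
  · rw [zero_add, confinedProb_zero_one hn, Nat.cast_one, one_mul, one_mul]
  · intro j _ hj
    rw [confinedProb_zero_of_ne_one n (by omega), zero_mul]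

theorem sinEnergy_succ (n : ℕ) (α : ℝ) (t : ℕ) :
    sinEnergy n α (t + 1) =
      cos α * sinEnergy n α t - confinedProb n t n * sin ((n + 1 : ℕ) * α) / 2 := by
  have by_parts := sum_range_add_two_mul (confinedProb n t) (fun i => sin (i * α)) n
  simp only [sin_add_sin_add_two, confinedProb_left, confinedProb_right, Nat.cast_zero, zero_mul,
    sin_zero, mul_zero, sub_zero, add_zero, zero_sub] at by_parts
  calc sinEnergy n α (t + 1)
      = (∑ j ∈ range n,
          (confinedProb n t j + confinedProb n t (j + 2)) * sin ((j + 1 : ℕ) * α)) / 2 := by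
        rw [sinEnergy, sum_div]
        refine sum_congr rfl fun j hj => ?_
        rw [confinedProb_succ t (mem_range.1 hj)]
        ring
    _ = cos α * sinEnergy n α t - confinedProb n t n * sin ((n + 1 : ℕ) * α) / 2 := by
        rw [by_parts, sinEnergy, mul_sum, add_div, sum_div, neg_div, ← sub_eq_add_neg]
        congr 1
        exact sum_congr rfl fun j _ => by ring

theorem sinEnergy_nonneg (hα : 0 ≤ α) (hnα : n * α ≤ π) (t : ℕ) : 0 ≤ sinEnergy n α t := by
  refine sum_nonneg fun j hj => mul_nonneg (confinedProb_nonneg ..) ?_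
  have hjn : ((j + 1 : ℕ) : ℝ) ≤ n := by exact_mod_cast mem_range.1 hj
  refine sin_nonneg_of_nonneg_of_le_pi (by positivity) (le_trans ?_ hnα)
  gcongr

end Energy

section GeometricDecay

variable {E : ℕ → ℝ} {q : ℝ}

theorem sub_succ_mul_geom_sum_le (hE : ∀ t, 0 ≤ E t) (hE_anti : Antitone E) (hq : 0 ≤ q)
    (hdecay : ∀ t, q * (E t - E (t + 1)) ≤ E (t + 2) - E (t + 3)) (K t : ℕ) :
    (E t - E (t + 1)) * ∑ k ∈ range K, q ^ k ≤ E t := by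
  induction K generalizing t with
  | zero => simpa using hE t
  | succ K ih =>
    calc (E t - E (t + 1)) * ∑ k ∈ range (K + 1), q ^ k
        = q * (E t - E (t + 1)) * ∑ k ∈ range K, q ^ k + (E t - E (t + 1)) := by
          rw [geom_sum_succ]; ring
      _ ≤ (E (t + 2) - E (t + 3)) * ∑ k ∈ range K, q ^ k + (E t - E (t + 1)) := by
          gcongr; exact hdecay t
      _ ≤ E (t + 2) + (E t - E (t + 1)) := by gcongr; exact ih (t + 2)
      _ ≤ E t := by linarith [hE_anti (Nat.le_succ (t + 1))]

theorem sub_succ_le_of_geometric_decay (hE : ∀ t, 0 ≤ E t) (hE_anti : Antitone E) (hq : 0 ≤ q)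
    (hq1 : q < 1) (hdecay : ∀ t, q * (E t - E (t + 1)) ≤ E (t + 2) - E (t + 3)) (t : ℕ) :
    E t - E (t + 1) ≤ (1 - q) * E 0 := by
  have hlim : (E t - E (t + 1)) * (1 - q)⁻¹ ≤ E t :=
    le_of_tendsto' ((hasSum_geometric_of_lt_one hq hq1).tendsto_sum_nat.const_mul _)
      fun K => sub_succ_mul_geom_sum_le hE hE_anti hq hdecay K t
  have hq_pos : 0 < 1 - q := sub_pos.2 hq1
  rw [← div_eq_mul_inv, div_le_iff₀' hq_pos] at hlim
  exact hlim.trans (mul_le_mul_of_nonneg_left (hE_anti t.zero_le) hq_pos.le)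

end GeometricDecay

section SineBound

variable {n : ℕ} {α : ℝ}

theorem sinEnergy_div_cos_pow_sub_succ (hα : (n + 1) * α = π / 2) (hcos : cos α ≠ 0) (t : ℕ) :
    sinEnergy n α t / cos α ^ t - sinEnergy n α (t + 1) / cos α ^ (t + 1) =
      confinedProb n t n / (2 * cos α ^ (t + 1)) := by
  have hsin : sin ((n + 1 : ℕ) * α) = 1 := by push_cast; rw [hα, sin_pi_div_two]
  rw [sinEnergy_succ, hsin]
  field_simp
  ring

theorem cos_sq_sub_cos_two_mul_sq (x : ℝ) :
    cos x ^ 2 - cos (2 * x) ^ 2 = sin x ^ 2 * (4 * cos x ^ 2 - 1) := by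
  rw [sin_sq, cos_two_mul]
  ring

theorem confinedProb_le_sin_cube_mul_cos_pow (hn : 2 ≤ n) (hα : (n + 1) * α = π / 2) (t : ℕ) :
    confinedProb n t n ≤ 6 * sin α ^ 3 * cos α ^ t := by
  have hn' : (2 : ℝ) ≤ n := by exact_mod_cast hn
  have hα_pos : 0 < α := pos_of_add_one_mul_eq hα (by positivity)
  have h3α : 3 * α ≤ π / 2 := hα ▸ by gcongr; linarith
  have hsin : 0 < sin α := sin_pos_of_pos_of_lt_pi hα_pos (by linarith)
  have hcos : 0 < cos α := cos_pos_of_mem_Ioo ⟨by linarith, by linarith⟩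
  have hcos2 : 0 < cos (2 * α) := cos_pos_of_mem_Ioo ⟨by linarith, by linarith⟩
  have hcos_lt : cos (2 * α) < cos α :=
    cos_lt_cos_of_nonneg_of_le_pi hα_pos.le (by linarith) (by linarith)
  have loss := sinEnergy_div_cos_pow_sub_succ hα hcos.ne'
  have ground : IsGroundState n (cos (2 * α)) fun i => sin (i * (2 * α)) :=
    isGroundState_sin (by linarith)
  have loss_le := sub_succ_le_of_geometric_decay (E := fun t => sinEnergy n α t / cos α ^ t)
    (q := (cos (2 * α) / cos α) ^ 2)
    (fun t => div_nonneg (sinEnergy_nonneg hα_pos.le (by linarith) t) (by positivity))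
    (antitone_nat_of_succ_le fun t => sub_nonneg.1 <| (loss t).symm ▸
      div_nonneg (confinedProb_nonneg ..) (by positivity))
    (by positivity) (pow_lt_one₀ (by positivity) ((div_lt_one hcos).2 hcos_lt) two_ne_zero)
    (fun t => by
      rw [loss, loss (t + 2)]
      exact ground.sq_div_mul_confinedProb_div_le hn hcos t) t
  rw [loss, sinEnergy_zero (by omega), pow_zero, div_one, div_le_iff₀ (by positivity)] at loss_le
  calc confinedProb n t n
      ≤ (1 - (cos (2 * α) / cos α) ^ 2) * sin α * (2 * cos α ^ (t + 1)) := loss_le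
    _ = 2 * sin α * (cos α ^ 2 - cos (2 * α) ^ 2) / cos α * cos α ^ t := by field_simp; ring
    _ = 2 * sin α ^ 3 * ((4 * cos α ^ 2 - 1) / cos α) * cos α ^ t := by
        rw [cos_sq_sub_cos_two_mul_sq]; ring
    _ ≤ 2 * sin α ^ 3 * 3 * cos α ^ t := by
        gcongr
        rw [div_le_iff₀ hcos]
        nlinarith [cos_le_one α]
    _ = 6 * sin α ^ 3 * cos α ^ t := by ring

end SineBound

theorem cos_le_exp_neg_sq_div_two {x : ℝ} (hx : 0 ≤ x) (hx' : x ≤ π / 2) :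
    cos x ≤ exp (-(x ^ 2 / 2)) := by
  have hderiv (y : ℝ) : HasDerivAt (fun y => cos y * exp (y ^ 2 / 2))
      ((y * cos y - sin y) * exp (y ^ 2 / 2)) y := by
    have hexp : HasDerivAt (fun y => exp (y ^ 2 / 2)) (exp (y ^ 2 / 2) * y) y := by
      simpa using ((hasDerivAt_pow 2 y).div_const 2).exp
    exact ((hasDerivAt_cos y).mul hexp).congr_deriv (by ring)
  have hanti : AntitoneOn (fun y => cos y * exp (y ^ 2 / 2)) (Set.Icc 0 (π / 2)) := by
    refine antitoneOn_of_hasDerivWithinAt_nonpos (convex_Icc _ _)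
      (fun y _ => (hderiv y).continuousAt.continuousWithinAt)
      (fun y _ => (hderiv y).hasDerivWithinAt) fun y hy => ?_
    rw [interior_Icc] at hy
    have hcos : 0 < cos y := cos_pos_of_mem_Ioo ⟨by linarith [hy.1, pi_pos], hy.2⟩
    have htan : y * cos y ≤ sin y := by
      rw [← le_div_iff₀ hcos, ← tan_eq_sin_div_cos]
      exact le_tan hy.1.le hy.2
    exact mul_nonpos_of_nonpos_of_nonneg (by linarith) (exp_pos _).le
  have hle : cos x * exp (x ^ 2 / 2) ≤ 1 := by
    simpa using hanti ⟨le_rfl, by positivity⟩ ⟨hx, hx'⟩ hx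
  rwa [exp_neg, ← one_div, le_div_iff₀ (exp_pos _)]

theorem pow_mul_exp_neg_le {y : ℝ} (hy : 0 ≤ y) {k : ℕ} (hk : k ≠ 0) :
    y ^ k * exp (-y) ≤ (k / exp 1) ^ k := by
  have hexp : exp (-y) = exp (-(y / k)) ^ k := by
    rw [← exp_nat_mul]
    field_simp
  calc y ^ k * exp (-y) = (k * (y / k * exp (-(y / k)))) ^ k := by
        rw [hexp, ← mul_pow]
        field_simp
    _ ≤ (k * exp (-1)) ^ k := by gcongr; exact mul_exp_neg_le_exp_neg_one _
    _ = (k / exp 1) ^ k := by rw [exp_neg, div_eq_mul_inv]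

section CubicBounds

variable {n : ℕ}

theorem confinedProb_le_cube_mul_exp (hn : 2 ≤ n) {α : ℝ} (hα : (n + 1) * α = π / 2) (t : ℕ) :
    confinedProb n t n ≤ 6 * α ^ 3 * exp (-(t * (α ^ 2 / 2))) := by
  have hα_pos : 0 < α := pos_of_add_one_mul_eq hα (by positivity)
  have hα_le : α ≤ π / 2 := hα ▸ le_mul_of_one_le_left hα_pos.le (by simp)
  have hsin : 0 ≤ sin α := sin_nonneg_of_nonneg_of_le_pi hα_pos.le (by linarith)
  have hcos : 0 ≤ cos α := cos_nonneg_of_mem_Icc ⟨by linarith, hα_le⟩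
  calc confinedProb n t n ≤ 6 * sin α ^ 3 * cos α ^ t :=
        confinedProb_le_sin_cube_mul_cos_pow hn hα t
    _ ≤ 6 * α ^ 3 * exp (-(α ^ 2 / 2)) ^ t := by
        gcongr
        · exact sin_le hα_pos.le
        · exact cos_le_exp_neg_sq_div_two hα_pos.le hα_le
    _ = 6 * α ^ 3 * exp (-(t * (α ^ 2 / 2))) := by rw [← exp_nat_mul, mul_neg]

theorem confinedProb_mul_cube_le (hn : 2 ≤ n) (t : ℕ) : confinedProb n t n * n ^ 3 ≤ 24 := by
  obtain ⟨α, hα⟩ : ∃ α : ℝ, (n + 1) * α = π / 2 := ⟨π / 2 / (n + 1), by field_simp⟩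
  have hα_pos : 0 < α := pos_of_add_one_mul_eq hα (by positivity)
  have hnα : n * α ≤ 1.58 := by linarith [pi_lt_d2]
  calc confinedProb n t n * n ^ 3 ≤ 6 * α ^ 3 * exp (-(t * (α ^ 2 / 2))) * n ^ 3 := by
        gcongr; exact confinedProb_le_cube_mul_exp hn hα t
    _ ≤ 6 * α ^ 3 * 1 * n ^ 3 := by gcongr; exact exp_le_one_iff.2 (neg_nonpos.2 (by positivity))
    _ = 6 * (n * α) ^ 3 := by ring
    _ ≤ 6 * 1.58 ^ 3 := by gcongr
    _ ≤ 24 := by norm_num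

theorem confinedProb_mul_time_cube_le (hn : 2 ≤ n) (t : ℕ) :
    confinedProb n t n * t ^ 3 ≤ 64 * n ^ 3 := by
  obtain ⟨α, hα⟩ : ∃ α : ℝ, (n + 1) * α = π / 2 := ⟨π / 2 / (n + 1), by field_simp⟩
  have hα_pos : 0 < α := pos_of_add_one_mul_eq hα (by positivity)
  have hn' : (2 : ℝ) ≤ n := by exact_mod_cast hn
  have hnα : 1.04 ≤ n * α := by nlinarith [pi_gt_d2]
  have hexp : 2.7 ≤ exp 1 := by linarith [exp_one_gt_d9]
  have henα : 2.8 ≤ exp 1 * (n * α) := by nlinarith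
  have hmax := pow_mul_exp_neg_le (y := t * (α ^ 2 / 2)) (by positivity) three_ne_zero
  calc confinedProb n t n * t ^ 3 ≤ 6 * α ^ 3 * exp (-(t * (α ^ 2 / 2))) * t ^ 3 := by
        gcongr; exact confinedProb_le_cube_mul_exp hn hα t
    _ = 48 / α ^ 3 * ((t * (α ^ 2 / 2)) ^ 3 * exp (-(t * (α ^ 2 / 2)))) := by field_simp; ring
    _ ≤ 48 / α ^ 3 * ((3 : ℕ) / exp 1) ^ 3 := by gcongr
    _ = 1296 / (exp 1 * (n * α)) ^ 3 * n ^ 3 := by field_simp; norm_num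
    _ ≤ 1296 / 2.8 ^ 3 * n ^ 3 := by gcongr
    _ ≤ 64 * n ^ 3 := by gcongr; norm_num

end CubicBounds

theorem walkProb_le_min_general (n t : ℕ) (hn : n ≠ 0) (ht : t ≠ 0) :
    walkProb 1 t (fun w => endsAt (n : ℤ) w ∧ maxEq (n : ℤ) w ∧ minGE 1 w) ≤
      min (24 / (n : ℝ) ^ 3) (64 * ((n : ℝ) / (t : ℝ)) ^ 3) := by
  rw [walkProb_endsAt_maxEq_minGE]
  rcases (Nat.one_le_iff_ne_zero.2 hn).eq_or_lt with rfl | hn2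
  · rw [confinedProb_one_one_of_ne_zero ht]
    positivity
  · refine le_min ?_ ?_
    · rw [le_div_iff₀ (by positivity)]
      exact confinedProb_mul_cube_le hn2 t
    · rw [div_pow, ← mul_div_assoc, le_div_iff₀ (by positivity)]
      exact confinedProb_mul_time_cube_le hn2 t

/-- For integers `n ≥ 20` and `t ≥ n - 1`,
`Pr_1^t[w(t)=n, MAX(w)=n, MIN(w) ≥ 1] ≤ min {e^25/n³, 64·(n/t)³}`. -/
theorem walkProb_le_min (n t : ℕ) (hn : 20 ≤ n) (ht : n - 1 ≤ t) :
    walkProb 1 t (fun w => endsAt (n : ℤ) w ∧ maxEq (n : ℤ) w ∧ minGE 1 w) ≤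
      min (Real.exp 25 / (n : ℝ) ^ 3) (64 * ((n : ℝ) / (t : ℝ)) ^ 3) := by
  refine (walkProb_le_min_general n t (by omega) (by omega)).trans (min_le_min_right _ ?_)
  gcongr; linarith [add_one_le_exp (25 : ℝ)]
end

section
/- Let d ≥ 2 and n ≥ 2 be integers and let B = {1,…,n}^d ⊆ ℤ^d. For every pair of points u, v ∈ B, π_u(v) ≤ (8·log n + 4) · π_v(u), where log denotes the natural logarithm. -/
/-- A grid walk of length `t` from `v ∈ ℤ^d`: a function on `{0,…,t}` starting at `v`
whose consecutive values differ by exactly `1` in `ℓ¹`-norm. -/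
def IsGridWalkD (d : ℕ) (v : Fin d → ℤ) (t : ℕ) (w : Fin (t + 1) → Fin d → ℤ) : Prop :=
  w 0 = v ∧ ∀ j : Fin t, (∑ k : Fin d, |w j.succ k - w j.castSucc k|) = 1

/-- Membership in the box `B = {1,…,n}^d`. -/
def InBoxD (d n : ℕ) (p : Fin d → ℤ) : Prop :=
  ∀ k : Fin d, 1 ≤ p k ∧ p k ≤ (n : ℤ)

/-- `N_t(v, u)`: the number of grid walks of length `t` from `v` staying in `B \ {u}`
before time `t` and ending at `u` at time `t`. -/
noncomputable def gridHitCountD (d n : ℕ) (v u : Fin d → ℤ) (t : ℕ) : ℕ :=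
  {w : Fin (t + 1) → Fin d → ℤ | IsGridWalkD d v t w ∧
    (∀ j : Fin t, InBoxD d n (w j.castSucc) ∧ w j.castSucc ≠ u) ∧
    w (Fin.last t) = u}.ncard

/-- The potential `π_u(v) = Σ_{t ≥ 0} N_t(v,u) / (2d)^t`. -/
noncomputable def gridPotentialD (d n : ℕ) (u v : Fin d → ℤ) : ℝ :=
  ∑' t : ℕ, (gridHitCountD d n v u t : ℝ) / (2 * d) ^ t

/-!
For fixed `u`, the potential `π_u` vanishes outside the box, equals `1` at `u` and is discretely
harmonic at all other points of the box. Pairing it with the Laplacian `Δ` of `ℤ^d`, Green's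
identity gives the reciprocity law `π_u(v) · Δπ_v(v) = π_v(u) · Δπ_u(u)`, so it suffices to bound
`Δπ_u(u)` above and `Δπ_v(v)` below. Trivially `Δπ_u(u) ≤ 2d`. Green's identity also shows that
`Δπ_v(v)` is the Dirichlet energy of `π_v`. In each coordinate plane through `v`, the unit flow
from `v` that spreads evenly over the successive antidiagonals of a quadrant leaves the box within
`2n - 1` steps and has energy at most the harmonic number `H_{2n-1} ≤ 1 + 2 log n`. By
Cauchy–Schwarz the energy of `π_v` in the two directions of the plane is at least the inverse of
that; averaging over planes gives `Δπ_v(v) ≥ d / (2 (1 + 2 log n))`.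
-/

open Finset Function

section Antidiagonal

/-- The average of `g` over the level `{(a, b) | a + b = k}` of the quadrant. -/
noncomputable def antidiagonalMean (g : ℕ × ℕ → ℝ) (k : ℕ) : ℝ :=
  (∑ p ∈ antidiagonal k, g p) / (k + 1)

variable (g : ℕ × ℕ → ℝ)

lemma succ_mul_sum_antidiagonal_succ (k : ℕ) :
    (k + 1 : ℝ) * ∑ p ∈ antidiagonal (k + 1), g p =
      ∑ p ∈ antidiagonal k,
        ((p.1 + 1) * g (p.1 + 1, p.2) + (p.2 + 1) * g (p.1, p.2 + 1)) := by
  calc (k + 1 : ℝ) * ∑ p ∈ antidiagonal (k + 1), g p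
    _ = ∑ p ∈ antidiagonal (k + 1), (p.1 * g p + p.2 * g p) := by
      rw [mul_sum]
      refine sum_congr rfl fun p hp ↦ ?_
      rw [← add_mul, ← Nat.cast_add, mem_antidiagonal.1 hp, Nat.cast_add_one]
    _ = _ := by
      rw [sum_add_distrib, Nat.sum_antidiagonal_succ, Nat.sum_antidiagonal_succ', sum_add_distrib]
      simp

/-- The coefficients are the unit flow out of the corner of the quadrant that crosses every
antidiagonal uniformly. -/
lemma antidiagonalMean_sub_succ (k : ℕ) :
    antidiagonalMean g k - antidiagonalMean g (k + 1) =
      ∑ p ∈ antidiagonal k,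
        ((p.1 + 1) / ((k + 1) * (k + 2)) * (g p - g (p.1 + 1, p.2)) +
          (p.2 + 1) / ((k + 1) * (k + 2)) * (g p - g (p.1, p.2 + 1))) := by
  have hsucc : antidiagonalMean g (k + 1) =
      (∑ p ∈ antidiagonal k,
        ((p.1 + 1) * g (p.1 + 1, p.2) + (p.2 + 1) * g (p.1, p.2 + 1))) /
          ((k + 1) * (k + 2)) := by
    rw [← succ_mul_sum_antidiagonal_succ, mul_div_mul_left _ _ (by positivity), antidiagonalMean]
    push_cast
    ring
  rw [hsucc, antidiagonalMean, sum_div, sum_div, ← sum_sub_distrib]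
  refine sum_congr rfl fun p hp ↦ ?_
  rw [← mem_antidiagonal.1 hp]
  push_cast
  field_simp
  ring

/-- The energy of `g` on the edges that lead from the level `a + b = k` to the next one. -/
def antidiagonalEnergy (k : ℕ) : ℝ :=
  ∑ p ∈ antidiagonal k, ((g (p.1 + 1, p.2) - g p) ^ 2 + (g (p.1, p.2 + 1) - g p) ^ 2)

lemma antidiagonalEnergy_nonneg (k : ℕ) : 0 ≤ antidiagonalEnergy g k :=
  sum_nonneg fun _ _ ↦ by positivity

lemma sq_mul_add_mul_le {a b : ℝ} (ha : 0 ≤ a) (hb : 0 ≤ b) (x y : ℝ) :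
    (a * x + b * y) ^ 2 ≤ (a + b) ^ 2 * (x ^ 2 + y ^ 2) := by
  nlinarith [sq_nonneg (a * y - b * x), mul_nonneg (mul_nonneg ha hb) (sq_nonneg x),
    mul_nonneg (mul_nonneg ha hb) (sq_nonneg y)]

lemma sq_antidiagonalMean_sub_succ_le (k : ℕ) :
    (antidiagonalMean g k - antidiagonalMean g (k + 1)) ^ 2 ≤
      (k + 1 : ℝ)⁻¹ * antidiagonalEnergy g k := by
  have hmass : ∑ _p ∈ antidiagonal k, ((k + 1 : ℝ)⁻¹) ^ 2 = (k + 1 : ℝ)⁻¹ := by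
    rw [sum_const, Nat.card_antidiagonal, nsmul_eq_mul]
    push_cast
    field_simp
  rw [antidiagonalMean_sub_succ, ← hmass]
  refine sum_sq_le_sum_mul_sum_of_sq_le_mul _ (fun _ _ ↦ by positivity)
    (fun _ _ ↦ by positivity) fun p hp ↦ ?_
  have hflow : (p.1 + 1 : ℝ) / ((k + 1) * (k + 2)) + (p.2 + 1) / ((k + 1) * (k + 2)) =
      (k + 1 : ℝ)⁻¹ := by
    rw [← mem_antidiagonal.1 hp]
    push_cast
    field_simp
    ring
  rw [← hflow, sub_sq_comm (g (p.1 + 1, p.2)), sub_sq_comm (g (p.1, p.2 + 1))]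
  exact sq_mul_add_mul_le (by positivity) (by positivity) _ _

theorem sq_apply_zero_le_harmonic_mul_energy {K : ℕ} (hK : ∀ p ∈ antidiagonal K, g p = 0) :
    g 0 ^ 2 ≤ harmonic K * ∑ k ∈ range K, antidiagonalEnergy g k := by
  have htelescope :
      ∑ k ∈ range K, (antidiagonalMean g k - antidiagonalMean g (k + 1)) = g 0 := by
    rw [sum_range_sub']
    simp [antidiagonalMean, sum_eq_zero hK, Prod.mk_zero_zero]
  have hharmonic : (harmonic K : ℝ) = ∑ k ∈ range K, (k + 1 : ℝ)⁻¹ := by simp [harmonic]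
  rw [← htelescope, hharmonic]
  exact sum_sq_le_sum_mul_sum_of_sq_le_mul _ (fun _ _ ↦ by positivity)
    (fun k _ ↦ antidiagonalEnergy_nonneg g k) fun k _ ↦ sq_antidiagonalMean_sub_succ_le g k

lemma sum_range_sum_antidiagonal_comp_le_tsum {α : Type*} {F : α → ℝ} (hF : Summable F)
    (hF0 : ∀ x, 0 ≤ F x) {φ : ℕ × ℕ → α} (hφ : Injective φ) (K : ℕ) :
    ∑ k ∈ range K, ∑ p ∈ antidiagonal k, F (φ p) ≤ ∑' x, F x := by
  classical
  have hdisjoint : (range K : Set ℕ).PairwiseDisjoint antidiagonal := fun k _ l _ hkl ↦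
    Finset.disjoint_left.2 fun _ hk hl ↦
      hkl ((mem_antidiagonal.1 hk).symm.trans (mem_antidiagonal.1 hl))
  rw [← sum_biUnion hdisjoint, ← sum_image (f := F) hφ.injOn]
  exact hF.sum_le_tsum _ fun x _ ↦ hF0 x

end Antidiagonal

section Green

lemma summable_mul_of_hasFiniteSupport {α : Type*} {f : α → ℝ} (hf : f.HasFiniteSupport)
    (h : α → ℝ) : Summable fun x ↦ f x * h x :=
  summable_of_hasFiniteSupport (hf.mul_left h)

variable {G : Type*} [AddCommGroup G]

/-- The part of the Dirichlet form carried by the edges `{x, x + e}` of a Cayley graph of `G`. -/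
noncomputable def directionalDirichletForm (e : G) (f h : G → ℝ) : ℝ :=
  ∑' x, (f (x + e) - f x) * (h (x + e) - h x)

lemma directionalDirichletForm_comm (e : G) (f h : G → ℝ) :
    directionalDirichletForm e f h = directionalDirichletForm e h f :=
  tsum_congr fun _ ↦ mul_comm _ _

lemma summable_comp_add_right_mul {f : G → ℝ} (hf : f.HasFiniteSupport) (e : G) (h : G → ℝ) :
    Summable fun x ↦ f (x + e) * h x :=
  summable_of_hasFiniteSupport
    ((hf.comp_of_injective (add_left_injective e)).mul_left h)

lemma tsum_mul_secondDifference {f : G → ℝ} (hf : f.HasFiniteSupport) (e : G) (h : G → ℝ) :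
    ∑' x, f x * (2 * h x - h (x + e) - h (x - e)) = directionalDirichletForm e f h := by
  have hback : Summable fun x ↦ f x * (h x - h (x - e)) := summable_mul_of_hasFiniteSupport hf _
  have hforth : Summable fun x ↦ f x * (h (x + e) - h x) := summable_mul_of_hasFiniteSupport hf _
  calc ∑' x, f x * (2 * h x - h (x + e) - h (x - e))
    _ = ∑' x, f x * (h x - h (x - e)) - ∑' x, f x * (h (x + e) - h x) := by
      rw [← hback.tsum_sub hforth]
      exact tsum_congr fun x ↦ by ring
    _ = ∑' x, f (x + e) * (h (x + e) - h x) - ∑' x, f x * (h (x + e) - h x) := by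
      rw [← (Equiv.addRight e).tsum_eq fun x ↦ f x * (h x - h (x - e))]
      simp
    _ = directionalDirichletForm e f h := by
      rw [← (summable_comp_add_right_mul hf e _).tsum_sub hforth]
      exact tsum_congr fun x ↦ by ring

variable {ι : Type*} [Fintype ι]

/-- The positive Laplacian of the Cayley graph of `G` with generators `± e i`, without
normalisation by the degree. -/
def cayleyLaplacian (e : ι → G) (h : G → ℝ) (x : G) : ℝ :=
  ∑ i, (2 * h x - h (x + e i) - h (x - e i))

lemma cayleyLaplacian_eq_sub_sum (e : ι → G) (h : G → ℝ) (x : G) :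
    cayleyLaplacian e h x = 2 * Fintype.card ι * h x - ∑ i, (h (x + e i) + h (x - e i)) := by
  simp only [cayleyLaplacian, sub_sub, sum_sub_distrib, sum_const, card_univ, nsmul_eq_mul]
  ring

theorem tsum_mul_cayleyLaplacian {f : G → ℝ} (hf : f.HasFiniteSupport) (e : ι → G) (h : G → ℝ) :
    ∑' x, f x * cayleyLaplacian e h x = ∑ i, directionalDirichletForm (e i) f h := by
  simp only [cayleyLaplacian, mul_sum]
  rw [Summable.tsum_finsetSum fun i _ ↦ summable_mul_of_hasFiniteSupport hf _]
  exact sum_congr rfl fun i _ ↦ tsum_mul_secondDifference hf (e i) h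

theorem tsum_mul_cayleyLaplacian_comm {f h : G → ℝ} (hf : f.HasFiniteSupport)
    (hh : h.HasFiniteSupport) (e : ι → G) :
    ∑' x, f x * cayleyLaplacian e h x = ∑' x, h x * cayleyLaplacian e f x := by
  simp only [tsum_mul_cayleyLaplacian hf, tsum_mul_cayleyLaplacian hh,
    directionalDirichletForm_comm _ f]

lemma summable_sq_sub_comp_add_right {h : G → ℝ} (hh : h.HasFiniteSupport) (e : G) :
    Summable fun x ↦ (h (x + e) - h x) ^ 2 := by
  refine ((summable_comp_add_right_mul hh e fun x ↦ h (x + e) - h x).sub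
    (summable_mul_of_hasFiniteSupport hh fun x ↦ h (x + e) - h x)).congr fun x ↦ ?_
  ring

theorem sq_apply_le_harmonic_mul_directionalDirichletForm_add {h : G → ℝ}
    (hh : h.HasFiniteSupport) {v e₁ e₂ : G}
    (hinj : Injective fun p : ℕ × ℕ ↦ v + p.1 • e₁ + p.2 • e₂) {K : ℕ}
    (hK : ∀ p ∈ antidiagonal K, h (v + p.1 • e₁ + p.2 • e₂) = 0) :
    h v ^ 2 ≤
      harmonic K * (directionalDirichletForm e₁ h h + directionalDirichletForm e₂ h h) := by
  let φ (p : ℕ × ℕ) : G := v + p.1 • e₁ + p.2 • e₂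
  have hφ₁ (p : ℕ × ℕ) : φ (p.1 + 1, p.2) = φ p + e₁ := by simp only [φ, succ_nsmul]; abel
  have hφ₂ (p : ℕ × ℕ) : φ (p.1, p.2 + 1) = φ p + e₂ := by simp only [φ, succ_nsmul]; abel
  have hsum₁ := summable_sq_sub_comp_add_right hh e₁
  have hsum₂ := summable_sq_sub_comp_add_right hh e₂
  have henergy : ∑ k ∈ range K, antidiagonalEnergy (h ∘ φ) k ≤
      directionalDirichletForm e₁ h h + directionalDirichletForm e₂ h h := by
    simp only [antidiagonalEnergy, comp_apply, hφ₁, hφ₂, directionalDirichletForm, ← pow_two]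
    rw [← hsum₁.tsum_add hsum₂]
    exact sum_range_sum_antidiagonal_comp_le_tsum (hsum₁.add hsum₂)
      (fun x ↦ by positivity) hinj K
  have hharmonic : (0 : ℝ) ≤ harmonic K := by
    exact_mod_cast sum_nonneg fun _ _ ↦ by positivity
  calc h v ^ 2 = (h ∘ φ) 0 ^ 2 := by simp [φ]
    _ ≤ harmonic K * ∑ k ∈ range K, antidiagonalEnergy (h ∘ φ) k :=
      sq_apply_zero_le_harmonic_mul_energy _ hK
    _ ≤ _ := mul_le_mul_of_nonneg_left henergy hharmonic

end Green

lemma card_mul_le_two_mul_sum_of_pairwise {ι : Type*} [Fintype ι] [Nontrivial ι] {E : ι → ℝ}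
    {c : ℝ} (hE : Pairwise fun i j ↦ c ≤ E i + E j) : Fintype.card ι * c ≤ 2 * ∑ i, E i := by
  let σ : Equiv.Perm ι := (Fintype.equivFin ι).symm.permCongr (finRotate _)
  have hrotate (k : Fin (Fintype.card ι)) : finRotate _ k ≠ k := by
    rw [← Equiv.Perm.mem_support, support_finRotate_of_le (Fintype.one_lt_card (α := ι))]
    exact mem_univ k
  have hσ (i : ι) : i ≠ σ i := by
    simpa [σ, Equiv.eq_symm_apply] using (hrotate (Fintype.equivFin ι i)).symm
  calc Fintype.card ι * c = ∑ _i : ι, c := by simp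
    _ ≤ ∑ i, (E i + E (σ i)) := sum_le_sum fun i _ ↦ hE (hσ i)
    _ = 2 * ∑ i, E i := by rw [sum_add_distrib, Equiv.sum_comp, two_mul]

lemma harmonic_two_mul_sub_one_le (n : ℕ) :
    (harmonic (2 * n - 1) : ℝ) ≤ 1 + 2 * Real.log n := by
  rcases n.eq_zero_or_pos with rfl | hn
  · simp
  have hsq : 2 * n - 1 ≤ n ^ 2 := by
    zify [show 1 ≤ 2 * n by lia]
    nlinarith [sq_nonneg ((n : ℤ) - 1)]
  calc (harmonic (2 * n - 1) : ℝ) ≤ 1 + Real.log (2 * n - 1 : ℕ) := harmonic_le_one_add_log _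
    _ ≤ 1 + Real.log ((n : ℝ) ^ 2) := by
      gcongr
      · exact_mod_cast (by lia : 0 < 2 * n - 1)
      · exact_mod_cast hsq
    _ = 1 + 2 * Real.log n := by simp

section Steps

variable {ι : Type*} [DecidableEq ι]

/-- The standard basis vector of `ℤ^ι`. -/
def unitVec (i : ι) : ι → ℤ := Pi.single i 1

/-- The `2 |ι|` lattice vectors of `ℓ¹`-norm one, indexed by axis and sign. -/
def unitStep (s : ι × ℤˣ) : ι → ℤ := Pi.single s.1 s.2

lemma unitStep_injective : Injective (unitStep (ι := ι)) := by
  rintro ⟨i, ε⟩ ⟨j, δ⟩ h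
  obtain rfl : i = j := by
    by_contra hij
    have hi := congrFun h i
    simp [unitStep, Pi.single_eq_of_ne hij] at hi
  simpa [unitStep, Units.ext_iff] using h

variable [Fintype ι]

lemma sum_abs_eq_one_iff_exists_unitStep {z : ι → ℤ} :
    ∑ k, |z k| = 1 ↔ ∃ s, z = unitStep s := by
  constructor
  · intro hz
    obtain ⟨i, hi⟩ : ∃ i, z i ≠ 0 := by
      by_contra! hzero
      simp [hzero] at hz
    have hsplit := add_sum_erase univ (fun k ↦ |z k|) (mem_univ i)
    have hrest : 0 ≤ ∑ k ∈ univ.erase i, |z k| := sum_nonneg fun _ _ ↦ abs_nonneg _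
    have habs : 1 ≤ |z i| := Int.one_le_abs hi
    have hoff : ∀ k ≠ i, z k = 0 := by
      have hsum : ∑ k ∈ univ.erase i, |z k| = 0 := by lia
      rw [sum_eq_zero_iff_of_nonneg fun _ _ ↦ abs_nonneg _] at hsum
      exact fun k hk ↦ abs_eq_zero.1 (hsum k (by simp [hk]))
    obtain ⟨ε, hε⟩ : IsUnit (z i) := Int.isUnit_iff_abs_eq.2 (by lia)
    refine ⟨(i, ε), funext fun k ↦ ?_⟩
    rcases eq_or_ne k i with rfl | hk
    · simp [unitStep, hε]
    · simp [unitStep, hk, hoff k hk]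
  · rintro ⟨⟨i, ε⟩, rfl⟩
    rw [sum_eq_single i (fun k _ hk ↦ by simp [unitStep, hk]) (by simp)]
    simpa [unitStep] using Int.isUnit_iff_abs_eq.1 ε.isUnit

lemma sum_unitStep {M : Type*} [AddCommMonoid M] (F : (ι → ℤ) → M) (v : ι → ℤ) :
    ∑ s, F (v + unitStep s) = ∑ i, (F (v + unitVec i) + F (v - unitVec i)) := by
  simp [Fintype.sum_prod_type, UnitsInt.univ, unitStep, unitVec, sub_eq_add_neg, Pi.single_neg]

end Steps

section Walks

variable {d n : ℕ} {u v : Fin d → ℤ}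

/-- The walks counted by `gridHitCountD`. -/
def gridHitWalks (d n : ℕ) (v u : Fin d → ℤ) (t : ℕ) : Set (Fin (t + 1) → Fin d → ℤ) :=
  {w | IsGridWalkD d v t w ∧
    (∀ j : Fin t, InBoxD d n (w j.castSucc) ∧ w j.castSucc ≠ u) ∧ w (Fin.last t) = u}

lemma gridHitCountD_eq_ncard (t : ℕ) : gridHitCountD d n v u t = (gridHitWalks d n v u t).ncard :=
  rfl

lemma isGridWalkD_cons {t : ℕ} {x : Fin d → ℤ} {w : Fin (t + 1) → Fin d → ℤ} :
    IsGridWalkD d v (t + 1) (Fin.cons x w : Fin (t + 2) → Fin d → ℤ) ↔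
      x = v ∧ ∃ s, IsGridWalkD d (v + unitStep s) t w := by
  have hstep : ∑ k, |w 0 k - x k| = 1 ↔ ∃ s, w 0 = x + unitStep s := by
    simpa [sub_eq_iff_eq_add'] using sum_abs_eq_one_iff_exists_unitStep (z := w 0 - x)
  simp only [IsGridWalkD, Fin.cons_zero, Fin.forall_fin_succ (n := t), Fin.cons_succ,
    Fin.castSucc_zero, Fin.castSucc_succ, hstep]
  grind

lemma cons_mem_gridHitWalks {t : ℕ} {x : Fin d → ℤ} {w : Fin (t + 1) → Fin d → ℤ} :
    (Fin.cons x w : Fin (t + 2) → Fin d → ℤ) ∈ gridHitWalks d n v u (t + 1) ↔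
      x = v ∧ (InBoxD d n v ∧ v ≠ u) ∧ ∃ s, w ∈ gridHitWalks d n (v + unitStep s) u t := by
  simp only [gridHitWalks, Set.mem_ofPred_eq, isGridWalkD_cons, Fin.forall_fin_succ (n := t),
    Fin.cons_zero, Fin.cons_succ, Fin.castSucc_zero, Fin.castSucc_succ, ← Fin.succ_last]
  grind

lemma gridHitWalks_succ (hv : InBoxD d n v ∧ v ≠ u) (t : ℕ) :
    gridHitWalks d n v u (t + 1) =
      ⋃ s, (Fin.cons (α := fun _ ↦ Fin d → ℤ) v) '' gridHitWalks d n (v + unitStep s) u t := by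
  ext w
  induction w using Fin.consCases with
  | _ x w =>
    simp only [cons_mem_gridHitWalks, Set.mem_iUnion, Set.mem_image, Fin.cons_inj]
    grind

lemma gridHitWalks_succ_eq_empty (hv : ¬(InBoxD d n v ∧ v ≠ u)) (t : ℕ) :
    gridHitWalks d n v u (t + 1) = ∅ := by
  ext w
  induction w using Fin.consCases with
  | _ x w => simp only [cons_mem_gridHitWalks, hv, false_and, and_false, Set.mem_empty_iff_false]

lemma gridHitWalks_zero_subset : gridHitWalks d n v u 0 ⊆ {fun _ ↦ u} := by
  rintro w ⟨-, -, hlast⟩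
  exact funext fun j ↦ by rw [Subsingleton.elim (α := Fin 1) j (Fin.last 0), hlast]

lemma gridHitWalks_finite (t : ℕ) : (gridHitWalks d n v u t).Finite := by
  induction t generalizing v with
  | zero => exact (Set.finite_singleton _).subset gridHitWalks_zero_subset
  | succ t ih =>
    by_cases hv : InBoxD d n v ∧ v ≠ u
    · rw [gridHitWalks_succ hv]
      exact Set.finite_iUnion fun _ ↦ ih.image _
    · rw [gridHitWalks_succ_eq_empty hv]
      exact Set.finite_empty

lemma gridHitCountD_zero_self : gridHitCountD d n u u 0 = 1 := by
  have hmem : (fun _ ↦ u) ∈ gridHitWalks d n u u 0 := by simp [gridHitWalks, IsGridWalkD]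
  rw [gridHitCountD_eq_ncard, gridHitWalks_zero_subset.antisymm (Set.singleton_subset_iff.2 hmem),
    Set.ncard_singleton]

lemma gridHitCountD_zero_of_ne (hvu : v ≠ u) : gridHitCountD d n v u 0 = 0 := by
  have hempty : gridHitWalks d n v u 0 = ∅ :=
    Set.eq_empty_of_forall_notMem fun _ ⟨⟨hfirst, _⟩, _, hlast⟩ ↦ hvu (hfirst.symm.trans hlast)
  rw [gridHitCountD_eq_ncard, hempty, Set.ncard_empty]

lemma gridHitCountD_succ_eq_zero (hv : ¬(InBoxD d n v ∧ v ≠ u)) (t : ℕ) :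
    gridHitCountD d n v u (t + 1) = 0 := by
  rw [gridHitCountD_eq_ncard, gridHitWalks_succ_eq_empty hv, Set.ncard_empty]

lemma gridHitCountD_succ (hv : InBoxD d n v ∧ v ≠ u) (t : ℕ) :
    gridHitCountD d n v u (t + 1) =
      ∑ i, (gridHitCountD d n (v + unitVec i) u t + gridHitCountD d n (v - unitVec i) u t) := by
  have hinj := Fin.cons_right_injective (n := t + 1) (α := fun _ ↦ Fin d → ℤ) v
  rw [← sum_unitStep fun x ↦ gridHitCountD d n x u t, gridHitCountD_eq_ncard,
    gridHitWalks_succ hv, Set.ncard_iUnion_of_finite, finsum_eq_sum_of_fintype]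
  · exact sum_congr rfl fun s _ ↦ Set.ncard_image_of_injective _ hinj
  · exact fun s ↦ (gridHitWalks_finite t).image _
  · refine fun s r hsr ↦ (Set.disjoint_image_iff hinj).2 <| Set.disjoint_left.2 fun w hs hr ↦ hsr ?_
    exact unitStep_injective (add_left_cancel (hs.1.1.symm.trans hr.1.1))

end Walks

section Potential

variable {d n : ℕ} {u v : Fin d → ℤ}

/-- The probability that simple random walk from `v` first reaches `u` at time `t`, without having
left the box before: the terms of the series `gridPotentialD`. -/
noncomputable def gridHitProb (d n : ℕ) (u v : Fin d → ℤ) (t : ℕ) : ℝ :=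
  gridHitCountD d n v u t / (2 * d) ^ t

lemma gridPotentialD_eq_tsum : gridPotentialD d n u v = ∑' t, gridHitProb d n u v t := rfl

lemma gridHitProb_nonneg (t : ℕ) : 0 ≤ gridHitProb d n u v t := by
  unfold gridHitProb; positivity

lemma gridHitProb_zero_self : gridHitProb d n u u 0 = 1 := by
  simp [gridHitProb, gridHitCountD_zero_self]

lemma gridHitProb_zero_of_ne (hvu : v ≠ u) : gridHitProb d n u v 0 = 0 := by
  simp [gridHitProb, gridHitCountD_zero_of_ne hvu]

lemma gridHitProb_zero_le_one : gridHitProb d n u v 0 ≤ 1 := by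
  rcases eq_or_ne v u with rfl | hvu
  · exact gridHitProb_zero_self.le
  · exact (gridHitProb_zero_of_ne hvu).trans_le zero_le_one

lemma gridHitProb_succ_eq_zero (hv : ¬(InBoxD d n v ∧ v ≠ u)) (t : ℕ) :
    gridHitProb d n u v (t + 1) = 0 := by
  simp [gridHitProb, gridHitCountD_succ_eq_zero hv]

lemma gridHitProb_succ (hv : InBoxD d n v ∧ v ≠ u) (t : ℕ) :
    gridHitProb d n u v (t + 1) =
      (∑ i, (gridHitProb d n u (v + unitVec i) t + gridHitProb d n u (v - unitVec i) t)) /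
        (2 * d) := by
  simp only [gridHitProb, gridHitCountD_succ hv, ← add_div]
  rw [← sum_div, div_div, ← pow_succ]
  push_cast
  rfl

lemma sum_range_gridHitProb_le_one (T : ℕ) : ∑ t ∈ range T, gridHitProb d n u v t ≤ 1 := by
  induction T generalizing v with
  | zero => simp
  | succ T ih =>
    rw [sum_range_succ']
    by_cases hv : InBoxD d n v ∧ v ≠ u
    · simp only [gridHitProb_succ hv, gridHitProb_zero_of_ne hv.2, add_zero]
      rw [← sum_div, sum_comm]
      refine div_le_one_of_le₀ ?_ (by positivity)
      calc ∑ i, ∑ t ∈ range T,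
            (gridHitProb d n u (v + unitVec i) t + gridHitProb d n u (v - unitVec i) t)
        _ ≤ ∑ _i : Fin d, (1 + 1 : ℝ) :=
          sum_le_sum fun i _ ↦ sum_add_distrib.trans_le (add_le_add ih ih)
        _ = 2 * d := by norm_num [mul_comm]
    · simpa [gridHitProb_succ_eq_zero hv] using gridHitProb_zero_le_one

lemma summable_gridHitProb : Summable (gridHitProb d n u v) :=
  summable_of_sum_range_le gridHitProb_nonneg sum_range_gridHitProb_le_one

lemma gridPotentialD_nonneg : 0 ≤ gridPotentialD d n u v :=
  tsum_nonneg gridHitProb_nonneg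

lemma gridPotentialD_eq_gridHitProb_zero (hv : ¬(InBoxD d n v ∧ v ≠ u)) :
    gridPotentialD d n u v = gridHitProb d n u v 0 := by
  rw [gridPotentialD_eq_tsum, summable_gridHitProb.tsum_eq_zero_add]
  simp [gridHitProb_succ_eq_zero hv]

lemma gridPotentialD_self : gridPotentialD d n u u = 1 := by
  rw [gridPotentialD_eq_gridHitProb_zero (by simp), gridHitProb_zero_self]

lemma gridPotentialD_eq_zero_of_not_inBoxD (hu : InBoxD d n u) (hv : ¬InBoxD d n v) :
    gridPotentialD d n u v = 0 := by
  rw [gridPotentialD_eq_gridHitProb_zero (by simp [hv]), gridHitProb_zero_of_ne]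
  rintro rfl
  exact hv hu

lemma gridPotentialD_eq_average (hv : InBoxD d n v ∧ v ≠ u) :
    gridPotentialD d n u v =
      (∑ i, (gridPotentialD d n u (v + unitVec i) + gridPotentialD d n u (v - unitVec i))) /
        (2 * d) := by
  rw [gridPotentialD_eq_tsum, summable_gridHitProb.tsum_eq_zero_add,
    gridHitProb_zero_of_ne hv.2, zero_add]
  simp only [gridHitProb_succ hv]
  rw [tsum_div_const,
    Summable.tsum_finsetSum fun i _ ↦ summable_gridHitProb.add summable_gridHitProb]
  simp only [summable_gridHitProb.tsum_add summable_gridHitProb, ← gridPotentialD_eq_tsum]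

lemma finite_setOf_inBoxD : {p | InBoxD d n p}.Finite :=
  Set.Finite.pi' fun _ ↦ Set.finite_Icc (1 : ℤ) n

lemma hasFiniteSupport_of_eq_zero_of_not_inBoxD {f : (Fin d → ℤ) → ℝ}
    (hf : ∀ x, ¬InBoxD d n x → f x = 0) : f.HasFiniteSupport :=
  finite_setOf_inBoxD.subset fun x hx ↦ by_contra fun hxB ↦ hx (hf x hxB)

lemma hasFiniteSupport_gridPotentialD (hu : InBoxD d n u) :
    (gridPotentialD d n u).HasFiniteSupport :=
  hasFiniteSupport_of_eq_zero_of_not_inBoxD fun _ ↦ gridPotentialD_eq_zero_of_not_inBoxD hu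

lemma cayleyLaplacian_gridPotentialD_eq_zero (hv : InBoxD d n v ∧ v ≠ u) :
    cayleyLaplacian unitVec (gridPotentialD d n u) v = 0 := by
  rcases d.eq_zero_or_pos with rfl | hd
  · simp [cayleyLaplacian]
  rw [cayleyLaplacian_eq_sub_sum, gridPotentialD_eq_average hv, Fintype.card_fin,
    mul_div_cancel₀ _ (by positivity), sub_self]

lemma cayleyLaplacian_gridPotentialD_self_le :
    cayleyLaplacian unitVec (gridPotentialD d n u) u ≤ 2 * d := by
  rw [cayleyLaplacian_eq_sub_sum, gridPotentialD_self, Fintype.card_fin, mul_one]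
  exact sub_le_self _ (sum_nonneg fun _ _ ↦ add_nonneg gridPotentialD_nonneg gridPotentialD_nonneg)

lemma tsum_mul_cayleyLaplacian_gridPotentialD {f : (Fin d → ℤ) → ℝ}
    (hf : ∀ x, ¬InBoxD d n x → f x = 0) :
    ∑' x, f x * cayleyLaplacian unitVec (gridPotentialD d n v) x =
      f v * cayleyLaplacian unitVec (gridPotentialD d n v) v := by
  refine tsum_eq_single v fun x hxv ↦ ?_
  by_cases hx : InBoxD d n x
  · rw [cayleyLaplacian_gridPotentialD_eq_zero ⟨hx, hxv⟩, mul_zero]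
  · rw [hf x hx, zero_mul]

theorem gridPotentialD_mul_cayleyLaplacian_comm (hu : InBoxD d n u) (hv : InBoxD d n v) :
    gridPotentialD d n u v * cayleyLaplacian unitVec (gridPotentialD d n v) v =
      gridPotentialD d n v u * cayleyLaplacian unitVec (gridPotentialD d n u) u := by
  rw [← tsum_mul_cayleyLaplacian_gridPotentialD fun _ ↦ gridPotentialD_eq_zero_of_not_inBoxD hu,
    ← tsum_mul_cayleyLaplacian_gridPotentialD fun _ ↦ gridPotentialD_eq_zero_of_not_inBoxD hv]
  exact tsum_mul_cayleyLaplacian_comm (hasFiniteSupport_gridPotentialD hu)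
    (hasFiniteSupport_gridPotentialD hv) unitVec

theorem cayleyLaplacian_gridPotentialD_self_eq_energy (hv : InBoxD d n v) :
    cayleyLaplacian unitVec (gridPotentialD d n v) v =
      ∑ i, directionalDirichletForm (unitVec i) (gridPotentialD d n v) (gridPotentialD d n v) := by
  rw [← tsum_mul_cayleyLaplacian (hasFiniteSupport_gridPotentialD hv),
    tsum_mul_cayleyLaplacian_gridPotentialD fun _ ↦ gridPotentialD_eq_zero_of_not_inBoxD hv,
    gridPotentialD_self, one_mul]

end Potential

section Plane

variable {ι : Type*} [DecidableEq ι] {i j : ι}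

lemma add_nsmul_unitVec_apply_left (hij : i ≠ j) (v : ι → ℤ) (a b : ℕ) :
    (v + a • unitVec i + b • unitVec j) i = v i + a := by
  simp [unitVec, hij]

lemma add_nsmul_unitVec_apply_right (hij : i ≠ j) (v : ι → ℤ) (a b : ℕ) :
    (v + a • unitVec i + b • unitVec j) j = v j + b := by
  simp [unitVec, hij.symm]

lemma injective_add_nsmul_unitVec (hij : i ≠ j) (v : ι → ℤ) :
    Injective fun p : ℕ × ℕ ↦ v + p.1 • unitVec i + p.2 • unitVec j := by
  intro p q hpq
  have hi := congrFun hpq i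
  have hj := congrFun hpq j
  simp only [add_nsmul_unitVec_apply_left hij, add_nsmul_unitVec_apply_right hij] at hi hj
  exact Prod.ext (by lia) (by lia)

end Plane

lemma not_inBoxD_add_nsmul_unitVec {d n : ℕ} {v : Fin d → ℤ} (hv : InBoxD d n v) {i j : Fin d}
    (hij : i ≠ j) {a b : ℕ} (hab : 2 * n - 1 ≤ a + b) :
    ¬InBoxD d n (v + a • unitVec i + b • unitVec j) := by
  intro hbox
  have hi := (hbox i).2
  have hj := (hbox j).2
  rw [add_nsmul_unitVec_apply_left hij] at hi
  rw [add_nsmul_unitVec_apply_right hij] at hj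
  have := (hv i).1
  have := (hv j).1
  lia

theorem mul_sq_apply_le_mul_sum_directionalDirichletForm {d n : ℕ} (hd : 2 ≤ d)
    {h : (Fin d → ℤ) → ℝ} (hh : ∀ x, ¬InBoxD d n x → h x = 0) {v : Fin d → ℤ}
    (hv : InBoxD d n v) :
    d * h v ^ 2 ≤
      2 * (1 + 2 * Real.log n) * ∑ i, directionalDirichletForm (unitVec i) h h := by
  have : Nontrivial (Fin d) := Fin.nontrivial_iff_two_le.2 hd
  have hfin : h.HasFiniteSupport := hasFiniteSupport_of_eq_zero_of_not_inBoxD hh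
  let E (i : Fin d) : ℝ := directionalDirichletForm (unitVec i) h h
  have hE (i : Fin d) : 0 ≤ E i := tsum_nonneg fun _ ↦ mul_self_nonneg _
  have hplane : Pairwise fun i j ↦
      h v ^ 2 ≤ (1 + 2 * Real.log n) * E i + (1 + 2 * Real.log n) * E j := fun i j hij ↦
    calc h v ^ 2 ≤ harmonic (2 * n - 1) * (E i + E j) :=
          sq_apply_le_harmonic_mul_directionalDirichletForm_add hfin
            (injective_add_nsmul_unitVec hij v) fun p hp ↦
              hh _ (not_inBoxD_add_nsmul_unitVec hv hij (mem_antidiagonal.1 hp).ge)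
      _ ≤ (1 + 2 * Real.log n) * (E i + E j) :=
          mul_le_mul_of_nonneg_right (harmonic_two_mul_sub_one_le n) (add_nonneg (hE i) (hE j))
      _ = _ := mul_add _ _ _
  simpa [E, ← mul_sum, mul_assoc] using card_mul_le_two_mul_sum_of_pairwise hplane

theorem le_mul_cayleyLaplacian_gridPotentialD_self {d n : ℕ} (hd : 2 ≤ d) {v : Fin d → ℤ}
    (hv : InBoxD d n v) :
    (d : ℝ) ≤
      2 * (1 + 2 * Real.log n) * cayleyLaplacian unitVec (gridPotentialD d n v) v := by
  simpa [gridPotentialD_self, cayleyLaplacian_gridPotentialD_self_eq_energy hv] using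
    mul_sq_apply_le_mul_sum_directionalDirichletForm hd
      (fun _ ↦ gridPotentialD_eq_zero_of_not_inBoxD hv) hv

/-- For integers `d ≥ 2` and `n ≥ 2` and all `u, v ∈ B = {1,…,n}^d`,
`π_u(v) ≤ (8 log n + 4) · π_v(u)`. -/
theorem potential_swap_source_target (d n : ℕ) (hd : 2 ≤ d) (hn : 2 ≤ n)
    (u v : Fin d → ℤ) (hu : InBoxD d n u) (hv : InBoxD d n v) :
    gridPotentialD d n u v ≤ (8 * Real.log n + 4) * gridPotentialD d n v u := by
  have hd0 : (0 : ℝ) < d := by positivity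
  have hreciprocity := gridPotentialD_mul_cayleyLaplacian_comm hu hv
  set Δu := cayleyLaplacian unitVec (gridPotentialD d n u) u
  set Δv := cayleyLaplacian unitVec (gridPotentialD d n v) v
  have hΔu : Δu ≤ 2 * d := cayleyLaplacian_gridPotentialD_self_le
  have hΔv : d ≤ 2 * (1 + 2 * Real.log n) * Δv := le_mul_cayleyLaplacian_gridPotentialD_self hd hv
  refine le_of_mul_le_mul_right ?_ hd0
  calc gridPotentialD d n u v * d
    _ ≤ gridPotentialD d n u v * (2 * (1 + 2 * Real.log n) * Δv) :=
      mul_le_mul_of_nonneg_left hΔv gridPotentialD_nonneg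
    _ = 2 * (1 + 2 * Real.log n) * (gridPotentialD d n v u * Δu) := by rw [← hreciprocity]; ring
    _ ≤ 2 * (1 + 2 * Real.log n) * (gridPotentialD d n v u * (2 * d)) := by
      gcongr
      exact gridPotentialD_nonneg
    _ = (8 * Real.log n + 4) * gridPotentialD d n v u * d := by ring
end
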